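/- arXiv:1503.03283 — 3 statements merged into one kernel-verified Lean document; each statement's English description precedes it below -/
import Mathlib

section
/- For every odd prime p ≥ 5, the acyclic chromatic index of the complete bipartite graph K_{p²,p²} equals p² + 2; that is, K_{p²,p²} admits an acyclic proper edge coloring with p²+2 colors and admits no acyclic proper edge coloring with fewer colors. -/
open SimpleGraph

/-- A proper edge coloring of `G` with `k` colors: any two distinct edges
sharing a vertex receive different colors. -/
def IsProperEdgeColoring {V : Type*} (G : SimpleGraph V) {k : ℕ}
    (C : G.edgeSet → Fin k) : Prop :=
  ∀ e f : G.edgeSet, e ≠ f →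
    (∃ v : V, v ∈ (e : Sym2 V) ∧ v ∈ (f : Sym2 V)) → C e ≠ C f

/-- An edge coloring is acyclic if no cycle of `G` is bichromatic, i.e. no cycle
has all its edges colored with only two colors. -/
def IsAcyclicEdgeColoring {V : Type*} (G : SimpleGraph V) {k : ℕ}
    (C : G.edgeSet → Fin k) : Prop :=
  ∀ (v : V) (w : G.Walk v v), w.IsCycle →
    ¬ ∃ c₁ c₂ : Fin k, ∀ (e : Sym2 V) (he : e ∈ w.edges),
      C ⟨e, w.edges_subset_edgeSet he⟩ = c₁ ∨ C ⟨e, w.edges_subset_edgeSet he⟩ = c₂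

/-- The acyclic chromatic index: the least `k` such that `G` admits an acyclic
proper edge coloring with `k` colors. -/
noncomputable def acyclicChromaticIndex {V : Type*} (G : SimpleGraph V) : ℕ :=
  sInf {k : ℕ | ∃ C : G.edgeSet → Fin k,
    IsProperEdgeColoring G C ∧ IsAcyclicEdgeColoring G C}


/-! ### Graph lemmas -/

/-- A finite acyclic graph has no nonempty vertex set with inner degrees at least two. -/
theorem acyc_no_min_two {V : Type*} [Finite V] (G : SimpleGraph V) (hG : G.IsAcyclic)
    (W : Set V) (hW : W.Nonempty)
    (h : ∀ v ∈ W, ∃ a ∈ W, ∃ b ∈ W, a ≠ b ∧ G.Adj v a ∧ G.Adj v b) : False := by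
  classical
  have := Fintype.ofFinite V
  have key : ∀ m : ℕ, ∃ u v : V, ∃ q : G.Walk u v, q.IsPath ∧ v ∈ W ∧ q.length = m := by
    intro m
    induction m with
    | zero =>
      obtain ⟨v, hv⟩ := hW
      exact ⟨v, v, .nil, by simp, hv, rfl⟩
    | succ m ih =>
      obtain ⟨u, v, q, hq, hv, hl⟩ := ih
      obtain ⟨a, ha, b, hb, hab, hva, hvb⟩ := h v hv
      have : ∃ w ∈ W, G.Adj v w ∧ w ∉ q.support := by
        by_contra! hcon
        have h1 := hG.eq_penultimate_of_adj_end hq hva (hcon a ha hva)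
        have h2 := hG.eq_penultimate_of_adj_end hq hvb (hcon b hb hvb)
        exact hab (h1.trans h2.symm)
      obtain ⟨w, hw, hvw, hns⟩ := this
      exact ⟨u, w, q.concat hvw, hq.concat hns hvw, hw, by simp [hl]⟩
  obtain ⟨u, v, q, hq, -, hl⟩ := key (Fintype.card V)
  have := hq.length_lt
  omega

/-- Colour of the edge between left vertex `l` and right vertex `r`. -/
def edgeCol {n k : ℕ} (C : (completeBipartiteGraph (Fin n) (Fin n)).edgeSet → Fin k)
    (l r : Fin n) : Fin k :=
  C ⟨s(Sum.inl l, Sum.inr r), by simp⟩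

theorem edgeCol_injR {n k : ℕ} {C : (completeBipartiteGraph (Fin n) (Fin n)).edgeSet → Fin k}
    (hC : IsProperEdgeColoring _ C) {l r r' : Fin n} (h : edgeCol C l r = edgeCol C l r') :
    r = r' := by
  by_contra hne
  refine hC _ _ ?_ ⟨Sum.inl l, ?_, ?_⟩ h
  · intro he
    have := congrArg Subtype.val he
    simp at this
    exact hne this
  · simp
  · simp

theorem edgeCol_injL {n k : ℕ} {C : (completeBipartiteGraph (Fin n) (Fin n)).edgeSet → Fin k}
    (hC : IsProperEdgeColoring _ C) {l l' r : Fin n} (h : edgeCol C l r = edgeCol C l' r) :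
    l = l' := by
  by_contra hne
  refine hC _ _ ?_ ⟨Sum.inr r, ?_, ?_⟩ h
  · intro he
    have := congrArg Subtype.val he
    simp at this
    exact hne this
  · simp
  · simp

/-- In an acyclic colouring, no nonempty set of left vertices is closed under following
two colours. -/
theorem no_closed_set {n k : ℕ} {C : (completeBipartiteGraph (Fin n) (Fin n)).edgeSet → Fin k}
    (hA : IsAcyclicEdgeColoring _ C) (c₁ c₂ : Fin k) (σ τ : Equiv.Perm (Fin n)) (S : Set (Fin n))
    (hS : S.Nonempty) (h1 : ∀ x ∈ S, edgeCol C x (σ x) = c₁) (h2 : ∀ x ∈ S, edgeCol C x (τ x) = c₂)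
    (hne : ∀ x ∈ S, σ x ≠ τ x) (hc1 : ∀ x ∈ S, τ⁻¹ (σ x) ∈ S) (hc2 : ∀ x ∈ S, σ⁻¹ (τ x) ∈ S) :
    False := by
  classical
  let E : Set (Sym2 (Fin n ⊕ Fin n)) :=
    {e | ∃ h : e ∈ (completeBipartiteGraph (Fin n) (Fin n)).edgeSet, C ⟨e, h⟩ = c₁ ∨ C ⟨e, h⟩ = c₂}
  let H := SimpleGraph.fromEdgeSet E
  have hHK : H ≤ completeBipartiteGraph (Fin n) (Fin n) := by
    intro u v huv
    have := (SimpleGraph.fromEdgeSet_adj E).1 huv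
    obtain ⟨⟨h, -⟩, -⟩ := this
    exact h
  have hHac : H.IsAcyclic := by
    intro v w hw
    refine hA v (w.mapLe hHK) ((SimpleGraph.Walk.isCycle_mapLe hHK).2 hw) ⟨c₁, c₂, ?_⟩
    intro e he
    have he' : e ∈ w.edges := by simpa using he
    have := w.edges_subset_edgeSet he'
    rw [SimpleGraph.edgeSet_fromEdgeSet] at this
    obtain ⟨⟨h, h'⟩, -⟩ := this
    exact h'
  have adj1 : ∀ x ∈ S, H.Adj (Sum.inl x) (Sum.inr (σ x)) := fun x hx =>
    (SimpleGraph.fromEdgeSet_adj E).2 ⟨⟨by simp, Or.inl (h1 x hx)⟩, by simp⟩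
  have adj2 : ∀ x ∈ S, H.Adj (Sum.inl x) (Sum.inr (τ x)) := fun x hx =>
    (SimpleGraph.fromEdgeSet_adj E).2 ⟨⟨by simp, Or.inr (h2 x hx)⟩, by simp⟩
  refine acyc_no_min_two H hHac (Sum.inl '' S ∪ Sum.inr '' (σ '' S)) ?_ ?_
  · exact (hS.image _).inl
  · rintro v (⟨x, hx, rfl⟩ | ⟨-, ⟨x, hx, rfl⟩, rfl⟩)
    · refine ⟨Sum.inr (σ x), Or.inr ⟨_, ⟨x, hx, rfl⟩, rfl⟩, Sum.inr (τ x),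
        Or.inr ⟨_, ⟨_, hc2 x hx, by simp⟩, rfl⟩, ?_, adj1 x hx, adj2 x hx⟩
      simpa using hne x hx
    · refine ⟨Sum.inl x, Or.inl ⟨x, hx, rfl⟩, Sum.inl (τ⁻¹ (σ x)), Or.inl ⟨_, hc1 x hx, rfl⟩,
        ?_, (adj1 x hx).symm, ?_⟩
      · intro h
        have h' : x = τ⁻¹ (σ x) := by simpa using h
        apply hne x hx
        conv_rhs => rw [h']
        simp
      · have := (adj2 _ (hc1 x hx)).symm
        simpa using this

open Equiv.Perm in
/-- The lower bound for odd `n`. -/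
theorem lower_bound {n : ℕ} (hn : 3 ≤ n) (hodd : Odd n)
    (C : (completeBipartiteGraph (Fin n) (Fin n)).edgeSet → Fin (n + 1))
    (hC : IsProperEdgeColoring _ C) (hA : IsAcyclicEdgeColoring _ C) : False := by
  classical
  -- the missing colour at each left vertex
  have hmiss : ∀ l : Fin n, ∃ m : Fin (n + 1), ∀ c, c ≠ m ↔ ∃ r, edgeCol C l r = c := by
    intro l
    have hcard : (Finset.univ.image (edgeCol C l)).card = n := by
      rw [Finset.card_image_of_injective _ (fun r r' h => edgeCol_injR hC h)]; simp
    have h1 : ((Finset.univ.image (edgeCol C l))ᶜ).card = 1 := by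
      rw [Finset.card_compl, hcard]; simp
    obtain ⟨m, hm⟩ := Finset.card_eq_one.1 h1
    refine ⟨m, fun c => ?_⟩
    have := congrArg (fun s => c ∈ s) hm
    simp only [Finset.mem_compl, Finset.mem_image, Finset.mem_univ, true_and,
      Finset.mem_singleton, eq_iff_iff] at this
    rw [← not_iff_not, this]
    simp
  choose m hm using hmiss
  have hperm : ∀ c : Fin (n + 1), ∃ σ : Equiv.Perm (Fin n),
      ∀ x, m x ≠ c → edgeCol C x (σ x) = c := by
    intro c
    have hex : ∀ x, ∃ r, m x ≠ c → edgeCol C x r = c := by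
      intro x
      by_cases h : m x ≠ c
      · obtain ⟨r, hr⟩ := (hm x c).1 h.symm
        exact ⟨r, fun _ => hr⟩
      · exact ⟨x, fun h' => absurd h' h⟩
    choose f hf using hex
    obtain ⟨g, hg⟩ := Finset.exists_equiv_extend_of_card_eq (α := Fin n) (β := Fin n)
      (t := Finset.univ) (s := Finset.univ.filter (fun x => m x ≠ c)) (f := f) (by simp)
      (Finset.subset_univ _) (by
        intro x hx y hy hxy
        have hx' : m x ≠ c := by simpa using hx
        have hy' : m y ≠ c := by simpa using hy
        have h1 := hf x hx'
        have h2 := hf y hy'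
        rw [hxy] at h1
        exact edgeCol_injL hC (h1.trans h2.symm))
    refine ⟨g.trans (Equiv.subtypeUnivEquiv (by simp)), fun x hx => ?_⟩
    have := hg x (by simpa using hx)
    simp only [Equiv.trans_apply, Equiv.subtypeUnivEquiv_apply]
    rw [this]
    exact hf x hx
  choose σ hσ using hperm
  -- two-colour cycles
  have hclosed : ∀ (c d : Fin (n + 1)), c ≠ d → ∀ S : Set (Fin n), S.Nonempty →
      (∀ x ∈ S, m x ≠ c) → (∀ x ∈ S, m x ≠ d) →
      (∀ x ∈ S, ((σ d)⁻¹ * σ c) x ∈ S) → (∀ x ∈ S, ((σ d)⁻¹ * σ c)⁻¹ x ∈ S) → False := by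
    intro c d hcd S hS hc hd h1 h2
    refine no_closed_set hA c d (σ c) (σ d) S hS (fun x hx => hσ c x (hc x hx))
      (fun x hx => hσ d x (hd x hx)) ?_ (fun x hx => by simpa using h1 x hx)
      (fun x hx => by simpa using h2 x hx)
    intro x hx h
    have e1 := hσ c x (hc x hx)
    have e2 := hσ d x (hd x hx)
    rw [h] at e1
    exact hcd (e1.symm.trans e2)
  have hsame : ∀ (c d : Fin (n + 1)), c ≠ d → ∀ x, ∃ y,
      SameCycle ((σ d)⁻¹ * σ c) x y ∧ (m y = c ∨ m y = d) := by
    intro c d hcd x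
    by_contra! hcon
    refine hclosed c d hcd {y | SameCycle ((σ d)⁻¹ * σ c) x y} ⟨x, SameCycle.refl _ _⟩
      (fun y hy => (hcon y hy).1) (fun y hy => (hcon y hy).2) ?_ ?_
    · intro y hy
      exact sameCycle_apply_right.2 hy
    · intro y hy
      exact sameCycle_symm_apply_right.2 hy
  -- `m` is injective with exactly one value not attained
  have hnr : ∀ c d, (∀ x, m x ≠ c) → (∀ x, m x ≠ d) → c = d := by
    intro c d hc hd
    by_contra hcd
    obtain ⟨y, -, hy⟩ := hsame c d hcd ⟨0, by omega⟩
    rcases hy with hy | hy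
    · exact hc y hy
    · exact hd y hy
  have hcompl : ((Finset.univ.image m)ᶜ).card ≤ 1 := by
    rw [Finset.card_le_one]
    intro c hc d hd
    refine hnr c d (fun x hx => ?_) (fun x hx => ?_)
    · simp at hc; exact hc x hx
    · simp at hd; exact hd x hx
  have himg_le : (Finset.univ.image m).card ≤ n := by
    refine Finset.card_image_le.trans (by simp)
  have hcc := Finset.card_compl (Finset.univ.image m)
  simp only [Fintype.card_fin] at hcc
  have himg : (Finset.univ.image m).card = n := by omega
  have hinj : Function.Injective m := by
    have := (Finset.card_image_iff (s := Finset.univ) (f := m)).1 (by simp [himg])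
    intro x y hxy
    exact this (by simp) (by simp) hxy
  obtain ⟨c0, hc0⟩ : ∃ c0, ∀ x, m x ≠ c0 := by
    have : ((Finset.univ.image m)ᶜ).card = 1 := by omega
    obtain ⟨c0, h⟩ := Finset.card_eq_one.1 this
    refine ⟨c0, fun x hx => ?_⟩
    have : c0 ∈ (Finset.univ.image m)ᶜ := by rw [h]; simp
    simp at this
    exact this x hx
  have hsupp : ∀ l, ∀ x, SameCycle ((σ c0)⁻¹ * σ (m l)) l x := by
    intro l x
    obtain ⟨y, hy, h | h⟩ := hsame (m l) c0 (hc0 l) x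
    · rw [hinj h] at hy; exact hy.symm
    · exact absurd h (hc0 y)
  have hmove : ∀ l, ∀ x, ((σ c0)⁻¹ * σ (m l)) x ≠ x := by
    intro l x hx
    have hfix : ∀ y, y = x := by
      intro y
      have h := (hsupp l x).symm.trans (hsupp l y)
      exact (h.eq_of_left hx).symm
    have h1 := hfix ⟨0, by omega⟩
    have h2 := hfix ⟨1, by omega⟩
    have := h1.trans h2.symm
    simp at this
  have hsign : ∀ l, sign ((σ c0)⁻¹ * σ (m l)) = 1 := by
    intro l
    have hcyc : IsCycle ((σ c0)⁻¹ * σ (m l)) := ⟨l, hmove l l, fun y _ => hsupp l y⟩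
    have hs : support ((σ c0)⁻¹ * σ (m l)) = Finset.univ := by
      ext x
      simpa using hmove l x
    rw [hcyc.sign, hs]
    simp [hodd.neg_one_pow]
  -- the contradiction
  let l1 : Fin n := ⟨0, by omega⟩
  set r1 := σ (m l1) l1 with hr1
  obtain ⟨j, hj⟩ : ∃ j, edgeCol C l1 r1 = j := ⟨_, rfl⟩
  have hjm : m l1 ≠ j := fun h => ((hm l1 j).2 ⟨r1, hj⟩) h.symm
  have hfix : σ j l1 = r1 := edgeCol_injR hC ((hσ j l1 hjm).trans hj.symm)
  by_cases hj0 : j = c0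
  · apply hmove l1 l1
    rw [Equiv.Perm.mul_apply, ← hr1, ← hfix, hj0]
    simp
  · obtain ⟨l2, hl2⟩ : ∃ l2, m l2 = j := by
      by_contra! hcon
      exact hj0 (hnr j c0 hcon hc0)
    subst hl2
    set t := (σ (m l2))⁻¹ * σ (m l1) with ht
    have htfix : t l1 = l1 := by
      rw [ht, Equiv.Perm.mul_apply, ← hr1, ← hfix]
      simp
    have hl12 : l1 ≠ l2 := fun h => hjm (by rw [h])
    have htsame : ∀ x, x ≠ l1 → SameCycle t l2 x := by
      intro x hx
      obtain ⟨y, hy, h | h⟩ := hsame (m l1) (m l2) hjm x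
      · rw [hinj h] at hy
        exact absurd (hy.symm.eq_of_left htfix).symm hx
      · rw [hinj h] at hy; exact hy.symm
    have htmove : ∀ x, x ≠ l1 → t x ≠ x := by
      intro x hx hxx
      have hfix : ∀ y, y ≠ l1 → y = x := by
        intro y hy
        have h := (htsame x hx).symm.trans (htsame y hy)
        exact (h.eq_of_left hxx).symm
      have h1 := hfix ⟨1, by omega⟩ (by simp [l1])
      have h2 := hfix ⟨2, by omega⟩ (by simp [l1])
      have := h1.trans h2.symm
      simp at this
    have hcyc : IsCycle t :=
      ⟨l2, htmove l2 hl12.symm, fun y hy => htsame y (fun h => hy (by rw [h, htfix]))⟩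
    have hs : support t = Finset.univ.erase l1 := by
      ext x
      simp only [Equiv.Perm.mem_support, Finset.mem_erase, Finset.mem_univ, and_true]
      exact ⟨fun h h' => h (by rw [h', htfix]), htmove x⟩
    have hsg : sign t = -1 := by
      rw [hcyc.sign, hs, Finset.card_erase_of_mem (Finset.mem_univ _)]
      have : Even (n - 1) := by
        obtain ⟨q, hq⟩ := hodd
        exact ⟨q, by omega⟩
      simp [this.neg_one_pow]
    have ht' : t = ((σ c0)⁻¹ * σ (m l2))⁻¹ * ((σ c0)⁻¹ * σ (m l1)) := by
      rw [ht]; group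
    rw [ht', Equiv.Perm.sign_mul, Equiv.Perm.sign_inv, hsign, hsign] at hsg
    exact absurd hsg (by decide)

/-! ### From tables to edge colourings -/

/-- A table of colours with no closed two-coloured set yields an acyclic edge colouring. -/
theorem coloring_of_table {n k : ℕ} {L K : Type*} (eL : Fin n ≃ L) (eK : K ≃ Fin k)
    (col : L → L → K) (hR : ∀ x r r', col x r = col x r' → r = r')
    (hL : ∀ x x' r, col x r = col x' r → x = x')
    (h3 : ∀ (c₁ c₂ : K) (S : Set L), S.Nonempty →
      (∀ x ∈ S, ∃ r, ∃ x' ∈ S, x' ≠ x ∧ col x r = c₁ ∧ col x' r = c₂) →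
      (∀ x ∈ S, ∃ r, ∃ x' ∈ S, x' ≠ x ∧ col x r = c₂ ∧ col x' r = c₁) → False) :
    ∃ C : (completeBipartiteGraph (Fin n) (Fin n)).edgeSet → Fin k,
      IsProperEdgeColoring (completeBipartiteGraph (Fin n) (Fin n)) C ∧
      IsAcyclicEdgeColoring (completeBipartiteGraph (Fin n) (Fin n)) C := by
  classical
  have hform : ∀ e : (completeBipartiteGraph (Fin n) (Fin n)).edgeSet,
      ∃ l r : Fin n, (e : Sym2 (Fin n ⊕ Fin n)) = s(Sum.inl l, Sum.inr r) := by
    rintro ⟨e, he⟩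
    induction e using Sym2.ind with
    | _ u v =>
      rcases u with u | u <;> rcases v with v | v <;> simp at he ⊢
  choose l r hlr using hform
  let C : (completeBipartiteGraph (Fin n) (Fin n)).edgeSet → Fin k :=
    fun e => eK (col (eL (l e)) (eL (r e)))
  have hCval : ∀ (e : (completeBipartiteGraph (Fin n) (Fin n)).edgeSet) (x y : Fin n),
      (e : Sym2 (Fin n ⊕ Fin n)) = s(Sum.inl x, Sum.inr y) →
      C e = eK (col (eL x) (eL y)) := by
    intro e x y h
    have h' := (hlr e).symm.trans h
    simp at h'
    simp only [C, h'.1, h'.2]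
  have hproper : IsProperEdgeColoring (completeBipartiteGraph (Fin n) (Fin n)) C := by
    rintro e f hef ⟨v, hve, hvf⟩ hcol
    apply hef
    apply Subtype.ext
    rw [hlr e] at hve ⊢
    rw [hlr f] at hvf ⊢
    have hcol' := eK.injective hcol
    rcases v with v | v
    · simp at hve hvf
      have hq : l e = l f := hve.symm.trans hvf
      rw [hq] at hcol' ⊢
      rw [eL.injective (hR _ _ _ hcol')]
    · simp at hve hvf
      have hq : r e = r f := hve.symm.trans hvf
      rw [hq] at hcol' ⊢
      rw [eL.injective (hL _ _ _ hcol')]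
  refine ⟨C, hproper, ?_⟩
  rintro v w hw ⟨c₁, c₂, hc⟩
  have two : ∀ u ∈ w.support, ∃ (e f : Sym2 (Fin n ⊕ Fin n)) (he : e ∈ w.edges) (hf : f ∈ w.edges),
      u ∈ e ∧ u ∈ f ∧
      C ⟨e, w.edges_subset_edgeSet he⟩ = c₁ ∧ C ⟨f, w.edges_subset_edgeSet hf⟩ = c₂ ∧ c₁ ≠ c₂ := by
    intro u hu
    have h2 := hw.ncard_neighborSet_toSubgraph_eq_two hu
    obtain ⟨a, b, hab, hset⟩ := Set.ncard_eq_two.1 h2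
    have ha : s(u, a) ∈ w.edges := by
      rw [← SimpleGraph.Walk.adj_toSubgraph_iff_mem_edges]
      have : a ∈ w.toSubgraph.neighborSet u := by rw [hset]; simp
      exact this
    have hb : s(u, b) ∈ w.edges := by
      rw [← SimpleGraph.Walk.adj_toSubgraph_iff_mem_edges]
      have : b ∈ w.toSubgraph.neighborSet u := by rw [hset]; simp
      exact this
    have hne := hproper ⟨_, w.edges_subset_edgeSet ha⟩ ⟨_, w.edges_subset_edgeSet hb⟩
      (by
        intro h
        have := congrArg Subtype.val h
        simp at this
        rcases this with h | ⟨h1, h2⟩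
        · exact hab h
        · exact hab (h2.trans h1)) ⟨u, by simp, by simp⟩
    rcases hc _ ha with h1 | h1 <;> rcases hc _ hb with h2 | h2
    · exact absurd (h1.trans h2.symm) hne
    · exact ⟨_, _, ha, hb, by simp, by simp, h1, h2, by rw [← h1, ← h2]; exact hne⟩
    · exact ⟨_, _, hb, ha, by simp, by simp, h2, h1, by rw [← h1, ← h2]; exact hne.symm⟩
    · exact absurd (h1.trans h2.symm) hne
  have formR : ∀ (e : Sym2 (Fin n ⊕ Fin n)) (he : e ∈ w.edges) (y : Fin n), Sum.inr y ∈ e →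
      ∃ x, e = s(Sum.inl x, Sum.inr y) ∧ Sum.inl x ∈ w.support := by
    intro e he y hy
    have h := hlr ⟨e, w.edges_subset_edgeSet he⟩
    simp only at h
    rw [h] at hy
    simp at hy
    refine ⟨_, by rw [hy]; exact h, ?_⟩
    rw [h] at he
    exact w.fst_mem_support_of_mem_edges he
  have formL : ∀ (e : Sym2 (Fin n ⊕ Fin n)) (he : e ∈ w.edges) (x : Fin n), Sum.inl x ∈ e →
      ∃ y, e = s(Sum.inl x, Sum.inr y) ∧ Sum.inr y ∈ w.support := by
    intro e he y hy
    have h := hlr ⟨e, w.edges_subset_edgeSet he⟩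
    simp only at h
    rw [h] at hy
    simp at hy
    refine ⟨_, by rw [hy]; exact h, ?_⟩
    rw [h] at he
    exact w.snd_mem_support_of_mem_edges he
  refine h3 (eK.symm c₁) (eK.symm c₂) {x | Sum.inl (eL.symm x) ∈ w.support} ?_ ?_ ?_
  · have hv := w.start_mem_support
    rcases v with v | v
    · exact ⟨eL v, by simpa using hv⟩
    · obtain ⟨e, f, he, hf, hue, huf, -⟩ := two _ hv
      obtain ⟨x, -, hx⟩ := formR e he v hue
      exact ⟨eL x, by simpa using hx⟩
  · intro x hx
    obtain ⟨e, f, he, hf, hue, huf, h1, h2, h12⟩ := two _ hx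
    obtain ⟨y, rfl, hy⟩ := formL e he _ hue
    obtain ⟨e', f', he', hf', hue', huf', h1', h2', -⟩ := two _ hy
    obtain ⟨x', rfl, hx'⟩ := formR f' hf' _ huf'
    rw [hCval _ _ _ rfl] at h1 h2'
    refine ⟨eL y, eL x', by simpa using hx', ?_, ?_, ?_⟩
    · intro h
      rw [h] at h2'
      rw [eL.apply_symm_apply] at h1
      exact h12 (h1.symm.trans h2')
    · rw [eL.apply_symm_apply] at h1
      rw [← h1]; simp
    · rw [← h2']; simp
  · intro x hx
    obtain ⟨e, f, he, hf, hue, huf, h1, h2, h12⟩ := two _ hx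
    obtain ⟨y, rfl, hy⟩ := formL f hf _ huf
    obtain ⟨e', f', he', hf', hue', huf', h1', h2', -⟩ := two _ hy
    obtain ⟨x', rfl, hx'⟩ := formR e' he' _ hue'
    rw [hCval _ _ _ rfl] at h1' h2
    refine ⟨eL y, eL x', by simpa using hx', ?_, ?_, ?_⟩
    · intro h
      rw [h] at h1'
      rw [eL.apply_symm_apply] at h2
      exact h12 (h1'.symm.trans h2)
    · rw [eL.apply_symm_apply] at h2
      rw [← h2]; simp
    · rw [← h1']; simp

/-! ### Transitivity of the relative permutations -/

section Trans

variable {p : ℕ} [hp : Fact p.Prime]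

theorem exists_first_zero (J : ZMod p) :
    ∃ m : ℕ, m < p ∧ J + m = 0 ∧ ∀ k < m, J + (k : ZMod p) ≠ 0 := by
  classical
  have hex : ∃ m : ℕ, J + m = 0 := ⟨(-J).val, by simp⟩
  refine ⟨Nat.find hex, ?_, Nat.find_spec hex, fun k hk => Nat.find_min hex hk⟩
  exact (Nat.find_min' hex (m := (-J).val) (by simp)).trans_lt (ZMod.val_lt _)

theorem natCast_succ_ne_zero {k : ℕ} (hk : k + 1 < p) : (k : ZMod p) + 1 ≠ 0 := by
  intro h
  have h' : ((k + 1 : ℕ) : ZMod p) = 0 := by push_cast; exact h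
  rw [ZMod.natCast_eq_zero_iff] at h'
  have := Nat.le_of_dvd (by omega) h'
  omega

theorem closed_eq_univ {X : Type*} [Finite X] (T : X → X) (hT : Function.Injective T) (x0 : X)
    (h : ∀ Q : Set X, Q.Nonempty → (∀ x ∈ Q, T x ∈ Q) → x0 ∈ Q)
    (Q : Set X) (hQ : Q.Nonempty) (hcl : ∀ x ∈ Q, T x ∈ Q) : Q = Set.univ := by
  by_contra hne
  have hsub : T '' Q ⊆ Q := by rintro _ ⟨x, hx, rfl⟩; exact hcl x hx
  have heq : T '' Q = Q :=
    Set.eq_of_subset_of_ncard_le hsub (by rw [Set.ncard_image_of_injective _ hT])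
  have h1 := h Q hQ hcl
  have h2 := h Qᶜ (Set.nonempty_compl.2 hne) (by
    intro x hx hTx
    rw [← heq] at hTx
    obtain ⟨y, hy, hxy⟩ := hTx
    exact hx (hT hxy ▸ hy))
  exact h2 h1

/-- Iterating a translation reaches everything. -/
theorem all_of_shift (P : ZMod p → Prop) (s : ZMod p) (hs : s ≠ 0) (h : ∀ i, P i → P (i + s))
    (i : ZMod p) (hi : P i) (t : ZMod p) : P t := by
  have key : ∀ k : ℕ, P (i + k * s) := by
    intro k
    induction k with
    | zero => simpa using hi
    | succ k ih =>
      have := h _ ih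
      convert this using 1
      push_cast; ring
  have := key ((t - i) / s).val
  convert this using 1
  rw [ZMod.natCast_zmod_val]
  field_simp
  ring

/-- Normalised relative permutation. -/
def relT (s t d e : ZMod p) (x : ZMod p × ZMod p) : ZMod p × ZMod p :=
  (x.1 + t + (if x.2 = 0 then d else 0),
    x.2 + s + (if x.1 + t + (if x.2 = 0 then d else 0) = 0 then e else 0))

theorem relT_injective (s t d e : ZMod p) : Function.Injective (relT s t d e) := by
  rintro ⟨i, j⟩ ⟨i', j'⟩ h
  simp only [relT, Prod.mk.injEq] at h
  obtain ⟨h1, h2⟩ := h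
  rw [h1] at h2
  have hj : j = j' := by
    have := add_right_cancel h2
    exact add_right_cancel this
  subst hj
  have := add_right_cancel (add_right_cancel h1)
  rw [this]

theorem straight {d e : ZMod p} {Q : Set (ZMod p × ZMod p)} (hcl : ∀ x ∈ Q, relT 1 1 d e x ∈ Q)
    {I J : ZMod p} (h0 : (I, J) ∈ Q) (m : ℕ) (hJ : ∀ k < m, J + (k : ZMod p) ≠ 0)
    (hI : ∀ k < m, I + (k : ZMod p) + 1 ≠ 0) : (I + m, J + m) ∈ Q := by
  induction m with
  | zero => simpa using h0
  | succ m ih =>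
    have h1 := hcl _ (ih (fun k hk => hJ k (by omega)) (fun k hk => hI k (by omega)))
    simp only [relT, if_neg (hJ m (by omega)), add_zero, if_neg (hI m (by omega))] at h1
    push_cast
    rw [← add_assoc, ← add_assoc]
    exact h1

theorem trans_one {d e : ZMod p} (hde : d ≠ e) (Q : Set (ZMod p × ZMod p)) (hQ : Q.Nonempty)
    (hcl : ∀ x ∈ Q, relT 1 1 d e x ∈ Q) : Q = Set.univ := by
  refine closed_eq_univ _ (relT_injective 1 1 d e) (0, 0) ?_ Q hQ hcl
  clear hcl hQ Q
  intro Q ⟨⟨I, J⟩, hIJ⟩ hcl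
  have c2 : ∀ J0, ((0, J0) : ZMod p × ZMod p) ∈ Q → (-J0, 0) ∈ Q := by
    intro J0 h0
    obtain ⟨m, hmp, hm, hmin⟩ := exists_first_zero J0
    have := straight hcl h0 m hmin (fun k hk => by
      rw [zero_add]; exact natCast_succ_ne_zero (by omega))
    rw [hm, zero_add] at this
    rwa [← eq_neg_of_add_eq_zero_right hm]
  have c1 : ∀ i, ((i, 0) : ZMod p × ZMod p) ∈ Q → (0, e - i - d) ∈ Q := by
    intro i h0
    have h1 := hcl _ h0
    simp only [relT, if_true, zero_add] at h1
    by_cases hi : i + 1 + d = 0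
    · rw [if_pos hi, hi] at h1
      convert h1 using 2
      linear_combination -hi
    · rw [if_neg hi, add_zero] at h1
      obtain ⟨m, hmp, hm, hmin⟩ := exists_first_zero (i + 1 + d)
      obtain ⟨m, rfl⟩ : ∃ m', m = m' + 1 := by
        rcases m with _ | m
        · simp at hm; exact absurd hm hi
        · exact ⟨m, rfl⟩
      have h2 := straight hcl h1 m
        (fun k hk => by rw [add_comm]; exact natCast_succ_ne_zero (by omega))
        (fun k hk => by
          have := hmin (k + 1) (by omega)
          push_cast at this
          rwa [← add_assoc] at this)
      have h3 := hcl _ h2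
      have hne : (1 : ZMod p) + m ≠ 0 := by rw [add_comm]; exact natCast_succ_ne_zero (by omega)
      push_cast at hm
      rw [← add_assoc] at hm
      simp only [relT, if_neg hne, add_zero, if_pos hm] at h3
      rw [hm] at h3
      convert h3 using 2
      linear_combination -hm
  have hsec : ∃ i, ((i, 0) : ZMod p × ZMod p) ∈ Q := by
    obtain ⟨m, hmp, hm, hmin⟩ := exists_first_zero J
    obtain ⟨k, hkp, hk, hkmin⟩ := exists_first_zero (I + 1)
    by_cases hmk : m ≤ k
    · have := straight hcl hIJ m hmin (fun k' hk' => by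
        have := hkmin k' (by omega)
        rwa [add_right_comm] at this)
      rw [hm] at this
      exact ⟨_, this⟩
    · have h2 := straight hcl hIJ k (fun k' hk' => hmin k' (by omega)) (fun k' hk' => by
        have := hkmin k' (by omega)
        rwa [add_right_comm] at this)
      have h3 := hcl _ h2
      rw [add_right_comm] at hk
      simp only [relT, if_neg (hmin k (by omega)), add_zero, if_pos hk] at h3
      rw [hk] at h3
      exact ⟨_, c2 _ h3⟩
  obtain ⟨i, hi⟩ := hsec
  refine all_of_shift (fun i => ((i, 0) : ZMod p × ZMod p) ∈ Q) (d - e) (sub_ne_zero.2 hde) ?_ i hi 0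
  intro i hi
  have := c2 _ (c1 i hi)
  convert this using 2
  ring

theorem trans_two (Q : Set (ZMod p × ZMod p)) (hQ : Q.Nonempty)
    (hcl : ∀ x ∈ Q, relT 1 0 1 0 x ∈ Q) : Q = Set.univ := by
  refine closed_eq_univ _ (relT_injective 1 0 1 0) (0, 0) ?_ Q hQ hcl
  clear hcl hQ Q
  intro Q ⟨⟨I, J⟩, hIJ⟩ hcl
  have st : ∀ I J, ((I, J) : ZMod p × ZMod p) ∈ Q → (I, 0) ∈ Q := by
    intro I J h0
    obtain ⟨m, hmp, hm, hmin⟩ := exists_first_zero J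
    have : ∀ k ≤ m, ((I, J + k) : ZMod p × ZMod p) ∈ Q := by
      intro k hk
      induction k with
      | zero => simpa using h0
      | succ k ih =>
        have h1 := hcl _ (ih (by omega))
        simp only [relT, if_neg (hmin k (by omega)), add_zero, ite_self] at h1
        push_cast
        rwa [← add_assoc]
    have := this m le_rfl
    rwa [hm] at this
  refine all_of_shift (fun i => ((i, 0) : ZMod p × ZMod p) ∈ Q) 1 one_ne_zero ?_ I (st _ _ hIJ) 0
  intro i hi
  have := hcl _ hi
  simp only [relT, if_true, add_zero] at this
  exact st _ _ this

theorem trans_three (Q : Set (ZMod p × ZMod p)) (hQ : Q.Nonempty)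
    (hcl : ∀ x ∈ Q, relT 0 1 0 1 x ∈ Q) : Q = Set.univ := by
  refine closed_eq_univ _ (relT_injective 0 1 0 1) (0, 0) ?_ Q hQ hcl
  clear hcl hQ Q
  intro Q ⟨⟨I, J⟩, hIJ⟩ hcl
  have st : ∀ I J, ((I, J) : ZMod p × ZMod p) ∈ Q → (0, J + 1) ∈ Q := by
    intro I J h0
    obtain ⟨m, hmp, hm, hmin⟩ := exists_first_zero (I + 1)
    have : ∀ k ≤ m, ((I + k, J) : ZMod p × ZMod p) ∈ Q := by
      intro k hk
      induction k with
      | zero => simpa using h0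
      | succ k ih =>
        have h1 := hcl _ (ih (by omega))
        have h2 := hmin k (by omega)
        rw [add_right_comm] at h2
        simp only [relT, ite_self, add_zero, if_neg h2] at h1
        push_cast
        rwa [← add_assoc]
    have := hcl _ (this m le_rfl)
    rw [add_right_comm] at hm
    simp only [relT, ite_self, add_zero, if_pos hm] at this
    rwa [hm] at this
  refine all_of_shift (fun i => ((0, i) : ZMod p × ZMod p) ∈ Q) 1 one_ne_zero ?_ _ (st _ _ hIJ) 0
  intro i hi
  exact st _ _ hi

theorem trans_all {a b c : ZMod p} (hab : ¬ (a = 0 ∧ b = 0)) (hc : ¬ IsSquare c)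
    (Q : Set (ZMod p × ZMod p)) (hQ : Q.Nonempty)
    (hcl : ∀ x ∈ Q, relT a b a (c * b) x ∈ Q) : Q = Set.univ := by
  have hc0 : c ≠ 0 := by rintro rfl; exact hc (IsSquare.zero)
  -- scaling
  have scale : ∀ (u v s t d e : ZMod p), u ≠ 0 → v ≠ 0 → u * t = b → v * s = a → u * d = a →
      v * e = c * b →
      (∀ Q' : Set (ZMod p × ZMod p), Q'.Nonempty → (∀ x ∈ Q', relT s t d e x ∈ Q') →
        Q' = Set.univ) → Q = Set.univ := by
    intro u v s t d e hu hv h1 h2 h3 h4 h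
    have hne : {x : ZMod p × ZMod p | (u * x.1, v * x.2) ∈ Q} = Set.univ := by
      apply h
      · obtain ⟨⟨i, j⟩, hij⟩ := hQ
        refine ⟨(u⁻¹ * i, v⁻¹ * j), ?_⟩
        simpa [hu, hv] using hij
      · rintro ⟨i, j⟩ hij
        have := hcl _ hij
        have hfst : u * i + b + (if v * j = 0 then a else 0) =
            u * (i + t + (if j = 0 then d else 0)) := by
          simp only [mul_eq_zero, hv, false_or]
          split_ifs
          · linear_combination -h1 - h3
          · linear_combination -h1
        change (u * (i + t + (if j = 0 then d else 0)),
          v * (j + s + (if i + t + (if j = 0 then d else 0) = 0 then e else 0))) ∈ Q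
        simp only [relT, hfst] at this
        convert this using 2
        simp only [mul_eq_zero, hu, false_or]
        split_ifs
        · linear_combination h2 + h4
        · linear_combination h2
        · linear_combination h2 + h4
        · linear_combination h2
    ext ⟨i, j⟩
    have : ((u⁻¹ * i, v⁻¹ * j) : ZMod p × ZMod p) ∈
        {x : ZMod p × ZMod p | (u * x.1, v * x.2) ∈ Q} := by rw [hne]; trivial
    simpa [hu, hv] using this
  by_cases ha : a = 0
  · have hb : b ≠ 0 := fun h => hab ⟨ha, h⟩
    exact scale b (c * b) 0 1 0 1 hb (mul_ne_zero hc0 hb) (by simp) (by simp [ha]) (by simp [ha])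
      (by simp) trans_three
  · by_cases hb : b = 0
    · exact scale a a 1 0 1 0 ha ha (by simp [hb]) (by simp) (by simp) (by simp [hb]) trans_two
    · refine scale b a 1 1 (a / b) (c * b / a) hb ha (by simp) (by simp) (by field_simp)
        (by field_simp) (trans_one ?_)
      intro h
      apply hc
      refine ⟨a / b, ?_⟩
      field_simp at h ⊢
      linear_combination -h

end Trans

/-! ### The colouring -/

section Colouring

variable {p : ℕ} [hp : Fact p.Prime]

/-- Base colour of the edge between left vertex `x` and right vertex `r`. -/
def baseCol (κ : ZMod p) (x r : ZMod p × ZMod p) : ZMod p × ZMod p :=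
  if x.1 = 0 then
    if r.1 = 0 then
      ((r.2 + x.1) - ((x.2 - r.1) - (r.2 + x.1)) / (κ - 1),
        ((x.2 - r.1) - (r.2 + x.1)) / (κ - 1))
    else ((x.2 - r.1) - κ * (r.2 + x.1), r.2 + x.1)
  else
    if r.1 = 0 then (x.2 - r.1, (r.2 + x.1) - (x.2 - r.1))
    else (x.2 - r.1, r.2 + x.1)

theorem baseCol_eq {κ : ZMod p} (hκ : κ ≠ 1) {x r g : ZMod p × ZMod p} (h : baseCol κ x r = g) :
    x.2 = r.1 + (g.1 + if x.1 = 0 then κ * g.2 else 0) ∧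
    r.2 = -x.1 + (g.2 + if r.1 = 0 then g.1 else 0) := by
  have hκ' : κ - 1 ≠ 0 := sub_ne_zero.2 hκ
  subst h
  unfold baseCol
  split_ifs
  · constructor
    · field_simp
      ring
    · field_simp
      ring
  · constructor <;> simp
  · constructor <;> simp
  · constructor <;> simp

/-- The first exceptional matching. -/
def matchOne (κ : ZMod p) (x r : ZMod p × ZMod p) : Prop :=
  x.1 ≠ 0 ∧ r.1 = x.1 ∧ r.2 = -2 * κ * x.1 + κ ^ 2 * x.2

/-- The second exceptional matching. -/
def matchTwo (κ : ZMod p) (x r : ZMod p × ZMod p) : Prop :=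
  x.1 = κ ∧ r.1 = 1 ∧ r.2 = -κ + κ ^ 2 * (x.2 - 1)

open Classical in
/-- The full colour table. -/
noncomputable def tableCol (κ : ZMod p) (x r : ZMod p × ZMod p) : (ZMod p × ZMod p) ⊕ Bool :=
  if matchOne κ x r then Sum.inr true
  else if matchTwo κ x r then Sum.inr false
  else Sum.inl (baseCol κ x r)

theorem tableCol_true {κ : ZMod p} {x r : ZMod p × ZMod p} (h : tableCol κ x r = Sum.inr true) :
    matchOne κ x r := by
  unfold tableCol at h
  split_ifs at h with h1 h2
  · exact h1
  · simp at h

theorem tableCol_false {κ : ZMod p} {x r : ZMod p × ZMod p} (h : tableCol κ x r = Sum.inr false) :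
    matchTwo κ x r := by
  unfold tableCol at h
  split_ifs at h with h1 h2
  · simp at h
  · exact h2

theorem tableCol_inl {κ : ZMod p} (hκ : κ ≠ 1) {x r g : ZMod p × ZMod p}
    (h : tableCol κ x r = Sum.inl g) :
    (x.2 = r.1 + (g.1 + if x.1 = 0 then κ * g.2 else 0) ∧
    r.2 = -x.1 + (g.2 + if r.1 = 0 then g.1 else 0)) ∧ ¬ matchOne κ x r ∧ ¬ matchTwo κ x r := by
  unfold tableCol at h
  split_ifs at h with h1 h2
  exact ⟨baseCol_eq hκ (Sum.inl_injective h), h1, h2⟩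

theorem tableCol_injR {κ : ZMod p} (hκ : κ ≠ 1) (x r r' : ZMod p × ZMod p)
    (h : tableCol κ x r = tableCol κ x r') : r = r' := by
  obtain ⟨c, hc⟩ : ∃ c, tableCol κ x r = c := ⟨_, rfl⟩
  have hc' := h.symm.trans hc
  rcases c with g | (_ | _)
  · obtain ⟨⟨h1, h2⟩, -⟩ := tableCol_inl hκ hc
    obtain ⟨⟨h1', h2'⟩, -⟩ := tableCol_inl hκ hc'
    have e1 : r.1 = r'.1 := add_right_cancel (h1.symm.trans h1')
    rw [e1] at h2
    exact Prod.ext e1 (h2.trans h2'.symm)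
  · obtain ⟨-, h1, h2⟩ := tableCol_false hc
    obtain ⟨-, h1', h2'⟩ := tableCol_false hc'
    exact Prod.ext (h1.trans h1'.symm) (h2.trans h2'.symm)
  · obtain ⟨-, h1, h2⟩ := tableCol_true hc
    obtain ⟨-, h1', h2'⟩ := tableCol_true hc'
    exact Prod.ext (h1.trans h1'.symm) (h2.trans h2'.symm)

theorem tableCol_injL {κ : ZMod p} (hκ : κ ≠ 1) (hκ0 : κ ≠ 0) (x x' r : ZMod p × ZMod p)
    (h : tableCol κ x r = tableCol κ x' r) : x = x' := by
  obtain ⟨c, hc⟩ : ∃ c, tableCol κ x r = c := ⟨_, rfl⟩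
  have hc' := h.symm.trans hc
  have hk2 : κ ^ 2 ≠ 0 := pow_ne_zero _ hκ0
  rcases c with g | (_ | _)
  · obtain ⟨⟨h1, h2⟩, -⟩ := tableCol_inl hκ hc
    obtain ⟨⟨h1', h2'⟩, -⟩ := tableCol_inl hκ hc'
    have e1 : x.1 = x'.1 := neg_injective (add_right_cancel (h2.symm.trans h2'))
    rw [e1] at h1
    exact Prod.ext e1 (h1.trans h1'.symm)
  · obtain ⟨h0, h1, h2⟩ := tableCol_false hc
    obtain ⟨h0', h1', h2'⟩ := tableCol_false hc'
    refine Prod.ext (h0.trans h0'.symm) (mul_left_cancel₀ hk2 ?_)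
    linear_combination h2' - h2
  · obtain ⟨h0, h1, h2⟩ := tableCol_true hc
    obtain ⟨h0', h1', h2'⟩ := tableCol_true hc'
    have e1 : x.1 = x'.1 := h1.symm.trans h1'
    rw [e1] at h2
    refine Prod.ext e1 (mul_left_cancel₀ hk2 ?_)
    linear_combination h2' - h2

/-- Two base colours. -/
theorem pair_base {κ : ZMod p} (hκ : ¬ IsSquare κ) {g g' : ZMod p × ZMod p} (hne : g ≠ g')
    (S : Set (ZMod p × ZMod p)) (hS : S.Nonempty)
    (h1 : ∀ x ∈ S, ∃ r, ∃ x' ∈ S, x' ≠ x ∧ tableCol κ x r = Sum.inl g ∧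
      tableCol κ x' r = Sum.inl g') : False := by
  have hκ1 : κ ≠ 1 := by rintro rfl; exact hκ IsSquare.one
  have hκ0 : κ ≠ 0 := by rintro rfl; exact hκ IsSquare.zero
  have hk1 : κ - 1 ≠ 0 := sub_ne_zero.2 hκ1
  have huniv : {q : ZMod p × ZMod p |
      (q.1, q.2 + (g.1 + if q.1 = 0 then κ * g.2 else 0)) ∈ S} = Set.univ := by
    refine trans_all (a := g'.1 - g.1) (b := g'.2 - g.2) (c := κ) ?_ hκ _ ?_ ?_
    · rintro ⟨ha, hb⟩
      exact hne (Prod.ext (sub_eq_zero.1 ha).symm (sub_eq_zero.1 hb).symm)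
    · obtain ⟨x, hx⟩ := hS
      refine ⟨(x.1, x.2 - (g.1 + if x.1 = 0 then κ * g.2 else 0)), ?_⟩
      change (x.1, _) ∈ S
      simpa using hx
    · rintro ⟨i, j⟩ hij
      obtain ⟨r, x', hx', -, hc, hc'⟩ := h1 _ hij
      obtain ⟨⟨e1, e2⟩, -⟩ := tableCol_inl hκ1 hc
      obtain ⟨⟨e1', e2'⟩, -⟩ := tableCol_inl hκ1 hc'
      simp only at e1 e2
      have hj : r.1 = j := (add_right_cancel e1).symm
      rw [hj] at e2 e1' e2'
      have hi' : i + (g'.2 - g.2) + (if j = 0 then g'.1 - g.1 else 0) = x'.1 := by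
        split_ifs at e2 e2' ⊢
        · linear_combination e2 - e2'
        · linear_combination e2 - e2'
      change (_, _) ∈ S
      simp only [relT, hi']
      convert hx' using 1
      refine Prod.ext rfl ?_
      simp only
      rw [e1']
      split_ifs
      · ring
      · ring
  have hall : ∀ x, x ∈ S := by
    intro x
    have : (x.1, x.2 - (g.1 + if x.1 = 0 then κ * g.2 else 0)) ∈ {q : ZMod p × ZMod p |
      (q.1, q.2 + (g.1 + if q.1 = 0 then κ * g.2 else 0)) ∈ S} := by rw [huniv]; trivial
    change (x.1, _) ∈ S at this
    simpa using this
  by_cases hd : g.2 = κ ^ 2 * g.1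
  · obtain ⟨r, x', -, -, hc, -⟩ := h1 (κ, g.1 + 1) (hall _)
    obtain ⟨⟨e1, e2⟩, -, h2⟩ := tableCol_inl hκ1 hc
    simp only [if_neg hκ0, add_zero] at e1 e2
    have hr : r.1 = 1 := by linear_combination -e1
    rw [hr, if_neg one_ne_zero] at e2
    exact h2 ⟨rfl, hr, by rw [e2]; simp only; linear_combination hd⟩
  · have hi : (g.2 - κ ^ 2 * g.1) / (κ - 1) ^ 2 ≠ 0 :=
      div_ne_zero (sub_ne_zero.2 hd) (pow_ne_zero _ hk1)
    have hi' : (g.2 - κ ^ 2 * g.1) / (κ - 1) ^ 2 * (κ - 1) ^ 2 = g.2 - κ ^ 2 * g.1 := by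
      field_simp
    generalize (g.2 - κ ^ 2 * g.1) / (κ - 1) ^ 2 = i at hi hi'
    obtain ⟨r, x', -, -, hc, -⟩ := h1 (i, i + g.1) (hall _)
    obtain ⟨⟨e1, e2⟩, h2, -⟩ := tableCol_inl hκ1 hc
    simp only [if_neg hi, add_zero] at e1 e2
    have hr : r.1 = i := by linear_combination -e1
    rw [hr, if_neg hi] at e2
    exact h2 ⟨hi, hr, by rw [e2]; simp only; linear_combination -hi'⟩

/-- A base colour against the first exceptional matching. -/
theorem pair_alpha {κ : ZMod p} (hκ : ¬ IsSquare κ)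
    (hgen : ∀ t : ZMod p, t ≠ 0 → ∃ k : ℕ, κ⁻¹ ^ k = t) (g : ZMod p × ZMod p)
    (S : Set (ZMod p × ZMod p)) (hS : S.Nonempty)
    (h1 : ∀ x ∈ S, ∃ r, ∃ x' ∈ S, x' ≠ x ∧ tableCol κ x r = Sum.inl g ∧
      tableCol κ x' r = Sum.inr true)
    (h2 : ∀ x ∈ S, ∃ r, tableCol κ x r = Sum.inr true) : False := by
  have hκ1 : κ ≠ 1 := by rintro rfl; exact hκ IsSquare.one
  have hκ0 : κ ≠ 0 := by rintro rfl; exact hκ IsSquare.zero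
  have hk1 : κ - 1 ≠ 0 := sub_ne_zero.2 hκ1
  obtain ⟨a, b⟩ := g
  have hi0 : ∀ x ∈ S, x.1 ≠ 0 := by
    intro x hx
    obtain ⟨r, hr⟩ := h2 x hx
    exact (tableCol_true hr).1
  have hstep : ∀ i y, (i, y) ∈ S → (y - a, κ⁻¹ ^ 2 * (b - i + 2 * κ * (y - a))) ∈ S ∧
      ((y - a, κ⁻¹ ^ 2 * (b - i + 2 * κ * (y - a))) : ZMod p × ZMod p) ≠ (i, y) := by
    intro i y hx
    have hi := hi0 _ hx
    obtain ⟨r, x', hx', hne, hc, hc'⟩ := h1 _ hx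
    obtain ⟨⟨e1, e2⟩, -⟩ := tableCol_inl hκ1 hc
    obtain ⟨f0, f1, f2⟩ := tableCol_true hc'
    simp only at e1 e2 hi
    rw [if_neg hi, add_zero] at e1
    rw [f1, if_neg f0, add_zero] at e2
    have hx'eq : x' = (y - a, κ⁻¹ ^ 2 * (b - i + 2 * κ * (y - a))) := by
      refine Prod.ext ?_ ?_
      · simp only; rw [← f1, e1]; ring
      · simp only
        have : y - a = x'.1 := by rw [← f1, e1]; ring
        rw [this]
        field_simp
        linear_combination e2 - f2
    rw [← hx'eq]
    exact ⟨hx', hne⟩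
  obtain ⟨iw, hiw⟩ : ∃ iw : ZMod p, iw * (κ - 1) ^ 2 = b - κ ^ 2 * a :=
    ⟨(b - κ ^ 2 * a) / (κ - 1) ^ 2, by field_simp⟩
  obtain ⟨⟨i, y⟩, hx⟩ := hS
  set u := i - iw with hu
  set η := κ * (y - (iw + a)) - u with hη
  have orbit : ∀ k : ℕ, (iw + κ⁻¹ ^ k * (u + k * η),
      iw + a + κ⁻¹ ^ (k + 1) * (u + (k + 1) * η)) ∈ S := by
    intro k
    induction k with
    | zero =>
      convert hx using 2
      · simp [hu]
      · have hinv : κ⁻¹ * κ = 1 := inv_mul_cancel₀ hκ0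
        simp only [hη]
        push_cast
        linear_combination (y - (iw + a)) * hinv
    | succ k ih =>
      have := (hstep _ _ ih).1
      convert this using 2
      · push_cast; ring
      · simp only [pow_succ, inv_pow]
        push_cast
        field_simp
        linear_combination κ ^ k * hiw
  by_cases hη0 : η = 0
  · by_cases hu0 : u = 0
    · have hi : i = iw := sub_eq_zero.1 hu0
      have hy : y = iw + a := by
        rw [hu0, sub_zero] at hη
        rw [hη0] at hη
        have := hη.symm
        rcases mul_eq_zero.1 this with h | h
        · exact absurd h hκ0
        · exact sub_eq_zero.1 h
      apply (hstep i y hx).2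
      rw [hi, hy]
      refine Prod.ext (by simp) ?_
      simp only
      field_simp
      linear_combination -hiw
    · by_cases hw : iw = 0
      · obtain ⟨k, hk⟩ := hgen (κ / u) (div_ne_zero hκ0 hu0)
        have ho := orbit k
        rw [pow_succ, hk, hη0, hw] at ho
        have ho' : (κ, a + 1) ∈ S := by
          convert ho using 2
          · field_simp
            ring
          · field_simp
            ring
        obtain ⟨r, x', -, -, hc, -⟩ := h1 _ ho'
        obtain ⟨⟨e1, e2⟩, -, hm⟩ := tableCol_inl hκ1 hc
        simp only [if_neg hκ0, add_zero] at e1 e2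
        have hr : r.1 = 1 := by linear_combination -e1
        rw [hr, if_neg one_ne_zero] at e2
        exact hm ⟨rfl, hr, by rw [e2]; simp only; linear_combination -hiw + (κ - 1) ^ 2 * hw⟩
      · obtain ⟨k, hk⟩ := hgen (-iw / u) (div_ne_zero (neg_ne_zero.2 hw) hu0)
        apply hi0 _ (orbit k)
        simp only
        rw [hk, hη0]
        field_simp
        ring
  · have ho := hi0 _ (orbit ((p - 1) * ((iw + u) / η).val))
    apply ho
    simp only
    rw [pow_mul, ZMod.pow_card_sub_one_eq_one (inv_ne_zero hκ0), one_pow, Nat.cast_mul,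
      ZMod.natCast_zmod_val, Nat.cast_sub hp.out.one_le]
    simp only [CharP.cast_eq_zero, Nat.cast_one]
    field_simp
    ring

/-- A base colour against the second exceptional matching. -/
theorem pair_beta {κ : ZMod p} (hκ : ¬ IsSquare κ) (g : ZMod p × ZMod p)
    (S : Set (ZMod p × ZMod p)) (hS : S.Nonempty)
    (h1 : ∀ x ∈ S, ∃ r, ∃ x' ∈ S, x' ≠ x ∧ tableCol κ x r = Sum.inl g ∧
      tableCol κ x' r = Sum.inr false)
    (h2 : ∀ x ∈ S, ∃ r, tableCol κ x r = Sum.inr false) : False := by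
  have hκ1 : κ ≠ 1 := by rintro rfl; exact hκ IsSquare.one
  have hκ0 : κ ≠ 0 := by rintro rfl; exact hκ IsSquare.zero
  have hall : ∀ x ∈ S, x = (κ, 1 + g.1) := by
    intro x hx
    obtain ⟨r, hr⟩ := h2 x hx
    have hi := (tableCol_false hr).1
    obtain ⟨r, x', -, -, hc, hc'⟩ := h1 x hx
    obtain ⟨⟨e1, e2⟩, -⟩ := tableCol_inl hκ1 hc
    obtain ⟨f0, f1, f2⟩ := tableCol_false hc'
    rw [hi, if_neg hκ0, add_zero, f1] at e1
    exact Prod.ext hi e1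
  obtain ⟨x, hx⟩ := hS
  obtain ⟨r, x', hx', hne, -⟩ := h1 x hx
  exact hne ((hall x' hx').trans (hall x hx).symm)

/-- The two exceptional matchings. -/
theorem pair_exc {κ : ZMod p} (hκ : κ ≠ 1)
    (S : Set (ZMod p × ZMod p)) (hS : S.Nonempty)
    (h1 : ∀ x ∈ S, ∃ r, ∃ x' ∈ S, x' ≠ x ∧ tableCol κ x r = Sum.inr true ∧
      tableCol κ x' r = Sum.inr false)
    (h2 : ∀ x ∈ S, ∃ r, tableCol κ x r = Sum.inr false) : False := by
  obtain ⟨x, hx⟩ := hS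
  obtain ⟨r', hr'⟩ := h2 x hx
  obtain ⟨r, x', -, -, hc, hc'⟩ := h1 x hx
  exact hκ ((tableCol_false hr').1.symm.trans
    ((tableCol_true hc).2.1.symm.trans (tableCol_false hc').2.1))

theorem table_no_closed {κ : ZMod p} (hκ : ¬ IsSquare κ)
    (hgen : ∀ t : ZMod p, t ≠ 0 → ∃ k : ℕ, κ⁻¹ ^ k = t)
    (c₁ c₂ : (ZMod p × ZMod p) ⊕ Bool) (S : Set (ZMod p × ZMod p)) (hS : S.Nonempty)
    (h1 : ∀ x ∈ S, ∃ r, ∃ x' ∈ S, x' ≠ x ∧ tableCol κ x r = c₁ ∧ tableCol κ x' r = c₂)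
    (h2 : ∀ x ∈ S, ∃ r, ∃ x' ∈ S, x' ≠ x ∧ tableCol κ x r = c₂ ∧ tableCol κ x' r = c₁) :
    False := by
  have hκ1 : κ ≠ 1 := by rintro rfl; exact hκ IsSquare.one
  have hκ0 : κ ≠ 0 := by rintro rfl; exact hκ IsSquare.zero
  have w1 : ∀ x ∈ S, ∃ r, tableCol κ x r = c₁ := fun x hx => by
    obtain ⟨r, x', -, -, h, -⟩ := h1 x hx
    exact ⟨r, h⟩
  have w2 : ∀ x ∈ S, ∃ r, tableCol κ x r = c₂ := fun x hx => by
    obtain ⟨r, x', -, -, h, -⟩ := h2 x hx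
    exact ⟨r, h⟩
  have hne : c₁ ≠ c₂ := by
    rintro rfl
    obtain ⟨x, hx⟩ := hS
    obtain ⟨r, x', -, hne, h, h'⟩ := h1 x hx
    exact hne (tableCol_injL hκ1 hκ0 _ _ _ (h'.trans h.symm))
  rcases c₁ with g | (_ | _) <;> rcases c₂ with g' | (_ | _)
  · exact pair_base hκ (fun h => hne (by rw [h])) S hS h1
  · exact pair_beta hκ g S hS h1 w2
  · exact pair_alpha hκ hgen g S hS h1 w2
  · exact pair_beta hκ g' S hS h2 w1
  · exact hne rfl
  · exact pair_exc hκ1 S hS h2 w1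
  · exact pair_alpha hκ hgen g' S hS h2 w1
  · exact pair_exc hκ1 S hS h1 w2
  · exact hne rfl

theorem exists_kappa (hp2 : p ≠ 2) : ∃ κ : ZMod p, ¬ IsSquare κ ∧
    ∀ t : ZMod p, t ≠ 0 → ∃ k : ℕ, κ⁻¹ ^ k = t := by
  obtain ⟨z, hz⟩ := IsCyclic.exists_generator (α := (ZMod p)ˣ)
  have hgen : ∀ t : ZMod p, t ≠ 0 → ∃ k : ℕ, (z : ZMod p) ^ k = t := by
    intro t ht
    have h := hz (Units.mk0 t ht)
    rw [← mem_powers_iff_mem_zpowers] at h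
    obtain ⟨k, hk⟩ := h
    refine ⟨k, ?_⟩
    have := congrArg Units.val hk
    simpa using this
  refine ⟨(z : ZMod p)⁻¹, ?_, fun t ht => by rw [inv_inv]; exact hgen t ht⟩
  rintro ⟨s, hs⟩
  obtain ⟨q, hq⟩ := FiniteField.exists_nonsquare (F := ZMod p) (by rwa [ZMod.ringChar_zmod_n])
  have hq0 : q ≠ 0 := by rintro rfl; exact hq IsSquare.zero
  obtain ⟨k, hk⟩ := hgen q hq0
  apply hq
  rw [← hk]
  refine IsSquare.pow k ⟨s⁻¹, ?_⟩
  rw [← mul_inv, ← hs, inv_inv]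

end Colouring

theorem upper_bound (p : ℕ) (hp : p.Prime) (hodd : Odd p) :
    ∃ C : (completeBipartiteGraph (Fin (p ^ 2)) (Fin (p ^ 2))).edgeSet → Fin (p ^ 2 + 2),
      IsProperEdgeColoring (completeBipartiteGraph (Fin (p ^ 2)) (Fin (p ^ 2))) C ∧
      IsAcyclicEdgeColoring (completeBipartiteGraph (Fin (p ^ 2)) (Fin (p ^ 2))) C := by
  have : Fact p.Prime := ⟨hp⟩
  have hp2 : p ≠ 2 := by rintro rfl; exact absurd hodd (by decide)
  obtain ⟨κ, hκ, hgen⟩ := exists_kappa hp2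
  have hκ1 : κ ≠ 1 := by rintro rfl; exact hκ IsSquare.one
  have hκ0 : κ ≠ 0 := by rintro rfl; exact hκ IsSquare.zero
  have e1 : Fin (p ^ 2) ≃ ZMod p × ZMod p :=
    (Fintype.equivFinOfCardEq (by simp [ZMod.card, sq])).symm
  have e2 : (ZMod p × ZMod p) ⊕ Bool ≃ Fin (p ^ 2 + 2) :=
    Fintype.equivFinOfCardEq (by simp [ZMod.card, sq])
  exact coloring_of_table e1 e2 (tableCol κ) (tableCol_injR hκ1) (tableCol_injL hκ1 hκ0)
    (table_no_closed hκ hgen)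

theorem no_fewer (n : ℕ) (hn : 3 ≤ n) (hodd : Odd n) (k : ℕ) (hk : k < n + 2) :
    ¬ ∃ C : (completeBipartiteGraph (Fin n) (Fin n)).edgeSet → Fin k,
      IsProperEdgeColoring (completeBipartiteGraph (Fin n) (Fin n)) C ∧
      IsAcyclicEdgeColoring (completeBipartiteGraph (Fin n) (Fin n)) C := by
  rintro ⟨C, hC, hA⟩
  have hk' : k ≤ n + 1 := by omega
  refine lower_bound hn hodd (fun e => Fin.castLE hk' (C e)) ?_ ?_
  · intro e f hef hv h
    exact hC e f hef hv (Fin.castLE_injective hk' h)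
  · rintro v w hw ⟨c₁, c₂, h⟩
    obtain ⟨e0, he0⟩ : ∃ e, e ∈ w.edges := by
      have := hw.three_le_length
      rw [← SimpleGraph.Walk.length_edges] at this
      exact List.exists_mem_of_length_pos (by omega)
    -- pull the two colours back
    have key : ∀ c : Fin (n + 1), ∃ d : Fin k, ∀ x : Fin k, Fin.castLE hk' x = c → x = d := by
      intro c
      by_cases hc : ∃ x : Fin k, Fin.castLE hk' x = c
      · obtain ⟨d, rfl⟩ := hc
        exact ⟨d, fun x hx => Fin.castLE_injective hk' hx⟩
      · exact ⟨C ⟨e0, w.edges_subset_edgeSet he0⟩, fun x hx => absurd ⟨x, hx⟩ hc⟩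
    obtain ⟨d₁, hd₁⟩ := key c₁
    obtain ⟨d₂, hd₂⟩ := key c₂
    exact hA v w hw ⟨d₁, d₂, fun e he => (h e he).imp (hd₁ _) (hd₂ _)⟩

/-- For every odd prime `p ≥ 5`, `a'(K_{p²,p²}) = p² + 2`: `K_{p²,p²}` admits an
acyclic proper edge coloring with `p² + 2` colors and none with fewer colors. -/
theorem stmt1 (p : ℕ) (hp : p.Prime) (hodd : Odd p) (hp5 : 5 ≤ p) :
    acyclicChromaticIndex (completeBipartiteGraph (Fin (p ^ 2)) (Fin (p ^ 2))) = p ^ 2 + 2 ∧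
    (∃ C : (completeBipartiteGraph (Fin (p ^ 2)) (Fin (p ^ 2))).edgeSet → Fin (p ^ 2 + 2),
      IsProperEdgeColoring (completeBipartiteGraph (Fin (p ^ 2)) (Fin (p ^ 2))) C ∧
      IsAcyclicEdgeColoring (completeBipartiteGraph (Fin (p ^ 2)) (Fin (p ^ 2))) C) ∧
    ∀ k : ℕ, k < p ^ 2 + 2 →
      ¬ ∃ C : (completeBipartiteGraph (Fin (p ^ 2)) (Fin (p ^ 2))).edgeSet → Fin k,
        IsProperEdgeColoring (completeBipartiteGraph (Fin (p ^ 2)) (Fin (p ^ 2))) C ∧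
        IsAcyclicEdgeColoring (completeBipartiteGraph (Fin (p ^ 2)) (Fin (p ^ 2))) C := by
  have hn : 3 ≤ p ^ 2 := by nlinarith
  have hlow := no_fewer (p ^ 2) hn hodd.pow
  have hup := upper_bound p hp hodd
  refine ⟨?_, hup, hlow⟩
  apply le_antisymm
  · exact Nat.sInf_le hup
  · refine le_csInf ⟨_, hup⟩ ?_
    intro k hk
    by_contra hlt
    exact hlow k (by omega) hk
end

section
/- For every odd prime p ≥ 5, the complete bipartite graph K_{p²,p²} admits an acyclic proper edge coloring using p² + 2 colors. -/
open SimpleGraph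

section Dyn
variable {K : Type*} [Field K] [DecidableEq K]

/-- The basic perturbed affine map. -/
def stp (g ν c1 c2 : K) (z : K × K) : K × K :=
  (g * z.1 + c1 - (if z.2 = 0 then ν * c2 else 0),
    g * z.2 + c2 - (if g * z.1 + c1 - (if z.2 = 0 then ν * c2 else 0) = 0 then c1 else 0))

def AffSeq (g c : K) (s : ℕ → K) : Prop := ∀ i, s (i + 1) = g * s i + c

structure Good (g : K) (N : ℕ) : Prop where
  pos : 1 ≤ N
  ne : g ≠ 0
  per : ∀ (c : K) (s : ℕ → K), AffSeq g c s → s N = s 0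
  noret : ∀ (c : K) (s : ℕ → K), c ≠ 0 → AffSeq g c s → s 0 = 0 → ∀ i, 1 ≤ i → i < N → s i ≠ 0
  hit : ∀ (c : K) (s : ℕ → K), c ≠ 0 → AffSeq g c s → s 0 ≠ g * s 0 + c →
    ∃ k, 1 ≤ k ∧ k ≤ N ∧ s k = 0 ∧ ∀ i, 1 ≤ i → i < k → s i ≠ 0

lemma exists_affSeq (g c a : K) : ∃ s : ℕ → K, AffSeq g c s ∧ s 0 = a :=
  ⟨fun i => Nat.rec a (fun _ r => g * r + c) i, fun _ => rfl, rfl⟩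

variable {g ν c1 c2 : K} {S : Set (K × K)}

lemma run {X Y : ℕ → K} (hX : AffSeq g c1 X) (hY : AffSeq g c2 Y)
    (hS : ∀ z ∈ S, stp g ν c1 c2 z ∈ S)
    (h1 : (X 1, Y 1 - (if X 1 = 0 then c1 else 0)) ∈ S) (k : ℕ)
    (h : ∀ i, 1 ≤ i → i ≤ k → (X i, Y i - (if X i = 0 then c1 else 0)) ∈ S →
      (X i = 0 → c1 = 0) ∧ (Y i = 0 → c2 = 0)) :
    (X (k + 1), Y (k + 1) - (if X (k + 1) = 0 then c1 else 0)) ∈ S := by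
  induction k with
  | zero => exact h1
  | succ k ih =>
    have hm := ih (fun i a b => h i a (by omega))
    obtain ⟨ha, hb⟩ := h (k + 1) (by omega) le_rfl hm
    have h0 : (if X (k + 1) = 0 then c1 else 0) = 0 := by
      split_ifs with h'
      · exact ha h'
      · rfl
    rw [h0, sub_zero] at hm
    have hq := hS _ hm
    have h2 : (if Y (k + 1) = 0 then ν * c2 else 0) = 0 := by
      split_ifs with h'
      · rw [hb h', mul_zero]
      · rfl
    simp only [stp, h2, sub_zero] at hq
    rw [hX (k + 1), hY (k + 1)]
    exact hq

/-- Starting point for `run` at an unperturbed point. -/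
lemma start_gen {X Y : ℕ → K} (hX : AffSeq g c1 X) (hY : AffSeq g c2 Y)
    (hS : ∀ z ∈ S, stp g ν c1 c2 z ∈ S) (h0 : (X 0, Y 0) ∈ S) (hy : Y 0 = 0 → c2 = 0) :
    (X 1, Y 1 - (if X 1 = 0 then c1 else 0)) ∈ S := by
  have hq := hS _ h0
  have h2 : (if Y 0 = 0 then ν * c2 else 0) = 0 := by
    split_ifs with h'
    · rw [hy h', mul_zero]
    · rfl
  simp only [stp, h2, sub_zero] at hq
  rw [hX 0, hY 0]
  exact hq

/-- Starting point for `run` at a point of row zero. -/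
lemma start_row {X Y : ℕ → K} (hX : AffSeq g c1 X) (hY : AffSeq g c2 Y) (hg : g ≠ 0)
    (hS : ∀ z ∈ S, stp g ν c1 c2 z ∈ S) {w : K} (h0 : (w, 0) ∈ S)
    (hX0 : X 0 = w - ν * c2 / g) (hY0 : Y 0 = 0) :
    (X 1, Y 1 - (if X 1 = 0 then c1 else 0)) ∈ S := by
  have hq := hS _ h0
  have e : X 1 = g * w + c1 - ν * c2 := by
    rw [hX 0, hX0]; field_simp; ring
  simp only [stp, if_true] at hq
  rw [hY 0, hY0, e]
  exact hq

variable {N : ℕ}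

lemma reachRow (G : Good g N) (hS : ∀ z ∈ S, stp g ν c1 c2 z ∈ S) (hc : c2 ≠ 0)
    (hP : ∀ z ∈ S, z.1 = 0 → c1 = 0) {z : K × K} (hz : z ∈ S) (hf : z.2 ≠ g * z.2 + c2) :
    ∃ w, (w, 0) ∈ S := by
  obtain ⟨Y, hY, hY0⟩ := exists_affSeq g c2 z.2
  have key : ∀ k, ∃ x, (x, Y k) ∈ S := by
    intro k
    induction k with
    | zero => exact ⟨z.1, by rw [hY0]; exact hz⟩
    | succ k ih =>
      obtain ⟨x, hx⟩ := ih
      have hq := hS _ hx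
      have := hP _ hq
      simp only [stp] at hq this
      refine ⟨g * x + c1 - (if Y k = 0 then ν * c2 else 0), ?_⟩
      rw [hY k]
      convert hq using 2
      split_ifs at * <;> simp_all
  obtain ⟨k, -, -, hk, -⟩ := G.hit c2 Y hc hY (by rw [hY0]; exact hf)
  obtain ⟨x, hx⟩ := key k
  exact ⟨x, hk ▸ hx⟩

lemma reachCol (G : Good g N) (hS : ∀ z ∈ S, stp g ν c1 c2 z ∈ S) (hc : c1 ≠ 0)
    (hP : ∀ z ∈ S, z.2 = 0 → c2 = 0) {z : K × K} (hz : z ∈ S) (hf : z.1 ≠ g * z.1 + c1) :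
    ∃ w, (0, w) ∈ S := by
  obtain ⟨X, hX, hX0⟩ := exists_affSeq g c1 z.1
  have key : ∀ k, ∃ y, (X k, y) ∈ S := by
    intro k
    induction k with
    | zero => exact ⟨z.2, by rw [hX0]; exact hz⟩
    | succ k ih =>
      obtain ⟨y, hy⟩ := ih
      have hq := hS _ hy
      have h2 : (if y = 0 then ν * c2 else 0) = 0 := by
        split_ifs with h'
        · rw [hP _ hy h', mul_zero]
        · rfl
      simp only [stp, h2, sub_zero] at hq
      exact ⟨_, by rw [hX k]; exact hq⟩
  obtain ⟨k, -, -, hk, -⟩ := G.hit c1 X hc hX (by rw [hX0]; exact hf)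
  obtain ⟨x, hx⟩ := key k
  exact ⟨x, hk ▸ hx⟩

lemma shiftRow (G : Good g N) (hS : ∀ z ∈ S, stp g ν c1 c2 z ∈ S) (hc : c2 ≠ 0)
    (hP : ∀ z ∈ S, z.1 = 0 → c1 = 0) {w : K} (hw : (w, 0) ∈ S) :
    (w + -(ν * c2 / g), 0) ∈ S := by
  obtain ⟨Y, hY, hY0⟩ := exists_affSeq g c2 0
  obtain ⟨X, hX, hX0⟩ := exists_affSeq g c1 (w - ν * c2 / g)
  have h := run hX hY hS (start_row hX hY G.ne hS hw hX0 hY0) (N - 1) (fun i h1 h2 hm =>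
    ⟨fun h => hP _ hm h, fun h => absurd h (G.noret c2 Y hc hY hY0 i h1 (by have := G.pos; omega))⟩)
  rw [Nat.sub_add_cancel G.pos, G.per _ _ hX, G.per _ _ hY, hX0, hY0] at h
  have := hP _ h
  rw [← sub_eq_add_neg]
  convert h using 2
  split_ifs at * <;> simp_all

lemma shiftCol (G : Good g N) (hS : ∀ z ∈ S, stp g ν c1 c2 z ∈ S) (hc : c1 ≠ 0)
    (hP : ∀ z ∈ S, z.2 = 0 → c2 = 0) {w : K} (hw : (0, w) ∈ S) :
    (0, w + -c1) ∈ S := by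
  obtain ⟨Y, hY, hY0⟩ := exists_affSeq g c2 w
  obtain ⟨X, hX, hX0⟩ := exists_affSeq g c1 0
  have hw' : (X 0, Y 0) ∈ S := by rw [hX0, hY0]; exact hw
  have h := run hX hY hS (start_gen hX hY hS hw' (fun h => hP _ hw' h)) (N - 1)
    (fun i h1 h2 hm => by
      have hx := G.noret c1 X hc hX hX0 i h1 (by have := G.pos; omega)
      refine ⟨fun h => absurd h hx, fun h => hP _ hm ?_⟩
      simp [hx, h])
  rw [Nat.sub_add_cancel G.pos, G.per _ _ hX, G.per _ _ hY, hX0, hY0, if_pos rfl] at h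
  rw [← sub_eq_add_neg]
  exact h

/-- From row zero to column zero. -/
lemma rowToCol (G : Good g N) (hS : ∀ z ∈ S, stp g ν c1 c2 z ∈ S) (hc1 : c1 ≠ 0) (hc2 : c2 ≠ 0)
    {X Y : ℕ → K} (hX : AffSeq g c1 X) (hY : AffSeq g c2 Y) {w : K} (hw : (w, 0) ∈ S)
    (hX0 : X 0 = w - ν * c2 / g) (hY0 : Y 0 = 0) (hf : X 0 ≠ g * X 0 + c1) :
    ∃ k, X k = 0 ∧ (0, Y k - c1) ∈ S := by
  obtain ⟨k, h1, h2, hk, hmin⟩ := G.hit c1 X hc1 hX hf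
  have h := run hX hY hS (start_row hX hY G.ne hS hw hX0 hY0) (k - 1) (fun i h1 h2 hm =>
    ⟨fun h => absurd h (hmin i h1 (by omega)),
      fun h => absurd h (G.noret c2 Y hc2 hY hY0 i h1 (by omega))⟩)
  rw [Nat.sub_add_cancel h1, hk, if_pos rfl] at h
  exact ⟨k, hk, h⟩

/-- From column zero to row zero. -/
lemma colToRow (G : Good g N) (hS : ∀ z ∈ S, stp g ν c1 c2 z ∈ S) (hc1 : c1 ≠ 0) (hc2 : c2 ≠ 0)
    {X Y : ℕ → K} (hX : AffSeq g c1 X) (hY : AffSeq g c2 Y) (hw : (X 0, Y 0) ∈ S)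
    (hX0 : X 0 = 0) (hf : Y 0 ≠ g * Y 0 + c2) :
    ∃ k, Y k = 0 ∧ (X k, 0) ∈ S := by
  by_cases hY0 : Y 0 = 0
  · exact ⟨0, hY0, by rw [hY0] at hw; exact hw⟩
  obtain ⟨k, h1, h2, hk, hmin⟩ := G.hit c2 Y hc2 hY hf
  have hkN : k < N := by
    rcases lt_or_eq_of_le h2 with h | h
    · exact h
    · rw [h, G.per _ _ hY] at hk
      exact absurd hk hY0
  have h := run hX hY hS (start_gen hX hY hS hw (fun h => absurd h hY0)) (k - 1)
    (fun i h1 h2 hm => ⟨fun h => absurd h (G.noret c1 X hc1 hX hX0 i h1 (by omega)),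
      fun h => absurd h (hmin i h1 (by omega))⟩)
  rw [Nat.sub_add_cancel h1, hk, if_neg (G.noret c1 X hc1 hX hX0 k h1 hkN), sub_zero] at h
  exact ⟨k, hk, h⟩

end Dyn


section Zp
variable {p : ℕ} [Fact p.Prime]

lemma shift_all {P : ZMod p → Prop} {a s : ZMod p} (ha : P a) (hs : s ≠ 0)
    (h : ∀ w, P w → P (w + s)) (b : ZMod p) : P b := by
  have key : ∀ m : ℕ, P (a + m * s) := by
    intro m
    induction m with
    | zero => simpa using ha
    | succ m ih =>
      have := h _ ih
      convert this using 1
      push_cast; ring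
  have := key ((b - a) / s).val
  rw [ZMod.natCast_zmod_val, div_mul_cancel₀ _ hs] at this
  simpa using this

lemma exists_min {s : ℕ → ZMod p} {N : ℕ} (h : ∃ k, 1 ≤ k ∧ k ≤ N ∧ s k = 0) :
    ∃ k, 1 ≤ k ∧ k ≤ N ∧ s k = 0 ∧ ∀ i, 1 ≤ i → i < k → s i ≠ 0 := by
  classical
  refine ⟨Nat.find h, (Nat.find_spec h).1, (Nat.find_spec h).2.1, (Nat.find_spec h).2.2, ?_⟩
  intro i h1 h2 h3
  exact Nat.find_min h h2 ⟨h1, by have := (Nat.find_spec h).2.1; omega, h3⟩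

lemma aff_one {c : ZMod p} {s : ℕ → ZMod p} (h : AffSeq 1 c s) (i : ℕ) : s i = s 0 + i * c := by
  induction i with
  | zero => simp
  | succ i ih => rw [h i, ih]; push_cast; ring

lemma aff_gen {g f : ZMod p} {s : ℕ → ZMod p} (h : AffSeq g ((1 - g) * f) s) (i : ℕ) :
    s i = f + g ^ i * (s 0 - f) := by
  induction i with
  | zero => simp
  | succ i ih => rw [h i, ih]; ring

lemma good_one : Good (1 : ZMod p) p where
  pos := (Fact.out : p.Prime).one_lt.le
  ne := one_ne_zero
  per c s h := by rw [aff_one h]; simp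
  noret c s hc h h0 i h1 h2 := by
    rw [aff_one h, h0, zero_add]
    refine mul_ne_zero ?_ hc
    rw [Ne, ZMod.natCast_eq_zero_iff]
    exact fun h => by have := Nat.le_of_dvd (by omega) h; omega
  hit c s hc h _ := by
    apply exists_min
    have hp := (Fact.out : p.Prime).pos
    by_cases h0 : s 0 = 0
    · exact ⟨p, hp, le_rfl, by rw [aff_one h, h0]; simp⟩
    · refine ⟨(-(s 0) / c).val, ?_, (ZMod.val_lt _).le, ?_⟩
      · rw [Nat.one_le_iff_ne_zero, Ne, ZMod.val_eq_zero]
        exact div_ne_zero (neg_ne_zero.2 h0) hc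
      · rw [aff_one h, ZMod.natCast_zmod_val, div_mul_cancel₀ _ hc]; ring

lemma good_prim {g : ZMod p} {N : ℕ} (hN : 1 ≤ N) (hg0 : g ≠ 0) (hgN : g ^ N = 1) (hg1 : g ≠ 1)
    (hm : ∀ i, 1 ≤ i → i < N → g ^ i ≠ 1)
    (hgen : ∀ a : ZMod p, a ≠ 0 → ∃ k, 1 ≤ k ∧ k ≤ N ∧ g ^ k = a) : Good g N := by
  have h1g : (1 : ZMod p) - g ≠ 0 := sub_ne_zero.2 (Ne.symm hg1)
  have eqf : ∀ c : ZMod p, c = (1 - g) * (c / (1 - g)) := fun c => by field_simp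
  refine ⟨hN, hg0, ?_, ?_, ?_⟩
  · intro c s h
    rw [eqf c] at h
    rw [aff_gen h, hgN]; ring
  · intro c s hc h h0 i h1 h2 hi
    rw [eqf c] at h
    rw [aff_gen h, h0] at hi
    have h3 : c / (1 - g) * (1 - g ^ i) = 0 := by linear_combination hi
    rcases mul_eq_zero.1 h3 with h4 | h4
    · exact div_ne_zero hc h1g h4
    · exact hm i h1 h2 (sub_eq_zero.1 h4).symm
  · intro c s hc h hf
    apply exists_min
    have hf' : s 0 - c / (1 - g) ≠ 0 := by
      intro h'
      apply hf
      have : s 0 = c / (1 - g) := sub_eq_zero.1 h'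
      rw [this]; field_simp; ring
    rw [eqf c] at h
    obtain ⟨k, k1, k2, hk⟩ := hgen (-(c / (1 - g)) / (s 0 - c / (1 - g)))
      (div_ne_zero (neg_ne_zero.2 (div_ne_zero hc h1g)) hf')
    refine ⟨k, k1, k2, ?_⟩
    rw [aff_gen h, hk, div_mul_cancel₀ _ hf']; ring

/-- Existence of a primitive root. -/
lemma exists_prim (hp : 5 ≤ p) : ∃ g : ZMod p, g ≠ 0 ∧ g ≠ 1 ∧ ¬ IsSquare g ∧ Good g (p - 1) ∧
    ∀ a : ZMod p, a ≠ 0 → ∃ k, 1 ≤ k ∧ k ≤ p - 1 ∧ g ^ k = a := by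
  obtain ⟨u, hu⟩ := IsCyclic.exists_generator (α := (ZMod p)ˣ)
  have ho : orderOf u = p - 1 := by
    rw [orderOf_eq_card_of_forall_mem_zpowers hu, Nat.card_eq_fintype_card, ZMod.card_units]
  have hgen : ∀ a : ZMod p, a ≠ 0 → ∃ k, 1 ≤ k ∧ k ≤ p - 1 ∧ (u : ZMod p) ^ k = a := by
    intro a ha
    obtain ⟨k, hk⟩ := (mem_powers_iff_mem_zpowers).2 (hu (Units.mk0 a ha))
    simp only at hk
    have hk' : u ^ (k % (p - 1)) = Units.mk0 a ha := by rw [← ho, pow_mod_orderOf]; exact hk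
    have hlt : k % (p - 1) < p - 1 := Nat.mod_lt _ (by omega)
    by_cases h0 : k % (p - 1) = 0
    · refine ⟨p - 1, by omega, le_rfl, ?_⟩
      rw [h0, pow_zero] at hk'
      have : u ^ (p - 1) = 1 := by rw [← ho, pow_orderOf_eq_one]
      rw [← Units.val_pow_eq_pow_val, this, hk']; rfl
    · refine ⟨k % (p - 1), by omega, hlt.le, ?_⟩
      rw [← Units.val_pow_eq_pow_val, hk']; rfl
  have hm : ∀ i, 1 ≤ i → i < p - 1 → (u : ZMod p) ^ i ≠ 1 := by
    intro i h1 h2 h3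
    have h4 : u ^ i = 1 := Units.ext (by simpa using h3)
    have := orderOf_le_of_pow_eq_one h1 h4
    omega
  have hN : (u : ZMod p) ^ (p - 1) = 1 := by
    rw [← Units.val_pow_eq_pow_val, ← ho, pow_orderOf_eq_one]; rfl
  have h1 : (u : ZMod p) ≠ 1 := by simpa using hm 1 le_rfl (by omega)
  refine ⟨u, u.ne_zero, h1, ?_, good_prim (by omega) u.ne_zero hN h1 hm hgen, hgen⟩
  rintro ⟨r, hr⟩
  have hodd : p % 2 = 1 := by
    rcases (Fact.out : p.Prime).eq_two_or_odd with h | h <;> omega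
  apply hm ((p - 1) / 2) (by omega) (by omega)
  have hr0 : r ≠ 0 := by
    rintro rfl
    exact u.ne_zero (by simpa using hr)
  rw [hr, ← pow_two, ← pow_mul, show 2 * ((p - 1) / 2) = p - 1 by omega]
  exact ZMod.pow_card_sub_one_eq_one hr0

/-- A nonresidue `q` such that `q - 1` is a square, `q ≠ -1`. -/
lemma exists_q (hp : 5 ≤ p) : ∃ q r : ZMod p, ¬ IsSquare q ∧ q - 1 = r * r ∧ q ≠ -1 := by
  classical
  obtain ⟨g, -, -, hg, -, -⟩ := exists_prim hp
  have hex : ∃ m : ℕ, ¬ IsSquare ((m : ℕ) : ZMod p) := ⟨g.val, by simpa using hg⟩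
  have hq := Nat.find_spec hex
  have hmin := fun m => Nat.find_min (m := m) hex
  set m := Nat.find hex
  have hm0 : m ≠ 0 := by
    intro h; rw [h] at hq; apply hq; simp
  obtain ⟨r, hr⟩ := not_not.1 (hmin (m - 1) (by omega))
  refine ⟨m, r, hq, ?_, ?_⟩
  · rw [← hr, Nat.cast_sub (by omega)]; simp
  · intro h
    -- then 2 and 3 are squares, hence so is -1
    have hmp : m + 1 = p := by
      have h1 : ((m + 1 : ℕ) : ZMod p) = 0 := by push_cast; rw [h]; ring
      rw [ZMod.natCast_eq_zero_iff] at h1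
      have h2 := Nat.le_of_dvd (by omega) h1
      have h3 : m ≤ p - 1 := by
        by_contra hlt
        have h4 : g.val < m := by have := ZMod.val_lt g; omega
        exact hmin _ h4 (by simpa using hg)
      omega
    have h2 : IsSquare ((2 : ℕ) : ZMod p) := not_not.1 (hmin 2 (by omega))
    have hodd : p % 2 = 1 := by
      rcases (Fact.out : p.Prime).eq_two_or_odd with h | h <;> omega
    have h3 : IsSquare (((p - 1) / 2 : ℕ) : ZMod p) := not_not.1 (hmin _ (by omega))
    apply hq
    have : (m : ZMod p) = ((2 : ℕ) : ZMod p) * (((p - 1) / 2 : ℕ) : ZMod p) := by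
      rw [← Nat.cast_mul]; congr 1; omega
    rw [this]
    exact h2.mul h3

/-- The perfect one-factorization property. -/
lemma pof {ν D1 D2 : ZMod p} (hν : ¬ IsSquare ν) (hD : ¬ (D1 = 0 ∧ D2 = 0))
    {S : Set (ZMod p × ZMod p)} (hS : ∀ z ∈ S, stp 1 ν D1 D2 z ∈ S) (hne : S.Nonempty) :
    (0, 0) ∈ S := by
  have hν0 : ν ≠ 0 := by rintro rfl; exact hν (by simp)
  obtain ⟨z, hz⟩ := hne
  by_cases h2 : D2 = 0
  · have h1 : D1 ≠ 0 := fun h => hD ⟨h, h2⟩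
    obtain ⟨w, hw⟩ := reachCol good_one hS h1 (fun _ _ _ => h2) hz (by simpa using h1)
    exact shift_all (P := fun y => (0, y) ∈ S) hw (neg_ne_zero.2 h1)
      (fun w hw => shiftCol good_one hS h1 (fun _ _ _ => h2) hw) 0
  by_cases h1 : D1 = 0
  · obtain ⟨w, hw⟩ := reachRow good_one hS h2 (fun _ _ _ => h1) hz (by simpa using h2)
    exact shift_all (P := fun y => (y, 0) ∈ S) hw
      (s := -(ν * D2 / 1)) (by simp [hν0, h2])
      (fun w hw => shiftRow good_one hS h2 (fun _ _ _ => h1) hw) 0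
  have hrow : ∃ w, (w, 0) ∈ S := by
    by_contra hcon
    push Not at hcon
    have hP : ∀ z ∈ S, z.2 = 0 → D2 = 0 := fun z hz h => absurd (h ▸ hz) (hcon z.1)
    obtain ⟨w, hw⟩ := reachCol good_one hS h1 hP hz (by simpa using h1)
    exact hcon 0 (shift_all (P := fun y => (0, y) ∈ S) hw (neg_ne_zero.2 h1)
      (fun w hw => shiftCol good_one hS h1 hP hw) 0)
  obtain ⟨w, hw⟩ := hrow
  have hs : (D1 ^ 2 - ν * D2 ^ 2) / D2 ≠ 0 := by
    refine div_ne_zero (fun h => hν ⟨D1 / D2, ?_⟩) h2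
    field_simp; linear_combination -h
  refine shift_all (P := fun y => (y, 0) ∈ S) hw hs (fun w hw => ?_) 0
  obtain ⟨Y, hY, hY0⟩ := exists_affSeq 1 D2 (0 : ZMod p)
  obtain ⟨X, hX, hX0⟩ := exists_affSeq 1 D1 (w - ν * D2 / 1)
  obtain ⟨k, hk, hkS⟩ := rowToCol good_one hS h1 h2 hX hY hw hX0 hY0 (by simpa using h1)
  obtain ⟨Y', hY', hY0'⟩ := exists_affSeq 1 D2 (Y k - D1)
  obtain ⟨X', hX', hX0'⟩ := exists_affSeq 1 D1 (0 : ZMod p)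
  obtain ⟨j, hj, hjS⟩ := colToRow good_one hS h1 h2 hX' hY' (by rw [hX0', hY0']; exact hkS) hX0'
    (by simpa using h2)
  convert hjS using 2
  rw [aff_one hX, hX0] at hk
  rw [aff_one hY', hY0', aff_one hY, hY0] at hj
  rw [aff_one hX', hX0']
  field_simp
  linear_combination D2 * hk - D1 * hj

end Zp


section Qmap
variable {p : ℕ} [Fact p.Prime] {g ν f1 f2 : ZMod p} {N : ℕ} {S : Set (ZMod p × ZMod p)}

lemma ne_aff (hg1 : g ≠ 1) {x f : ZMod p} (h : x ≠ f) : x ≠ g * x + (1 - g) * f := by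
  intro h'
  have h1g : (1 : ZMod p) - g ≠ 0 := sub_ne_zero.2 (Ne.symm hg1)
  have : (1 - g) * (x - f) = 0 := by linear_combination h'
  rcases mul_eq_zero.1 this with h2 | h2
  · exact h1g h2
  · exact h (sub_eq_zero.1 h2)

lemma row_all (G : Good g N) (hg1 : g ≠ 1) (hν : ν ≠ 0)
    (hS : ∀ z ∈ S, stp g ν ((1 - g) * f1) ((1 - g) * f2) z ∈ S) (hf2 : f2 ≠ 0)
    (hP : ∀ z ∈ S, z.1 = 0 → f1 = 0) {z : ZMod p × ZMod p} (hz : z ∈ S) (hf : z.2 ≠ f2)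
    (w : ZMod p) : (w, 0) ∈ S := by
  have h1g : (1 : ZMod p) - g ≠ 0 := sub_ne_zero.2 (Ne.symm hg1)
  have hc : (1 - g) * f2 ≠ 0 := mul_ne_zero h1g hf2
  have hP' : ∀ z ∈ S, z.1 = 0 → (1 - g) * f1 = 0 := fun z hz h => by rw [hP z hz h, mul_zero]
  obtain ⟨w0, hw0⟩ := reachRow G hS hc hP' hz (ne_aff hg1 hf)
  exact shift_all (P := fun y => (y, 0) ∈ S) hw0
    (neg_ne_zero.2 (div_ne_zero (mul_ne_zero hν hc) G.ne))
    (fun w hw => shiftRow G hS hc hP' hw) w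

lemma col_all (G : Good g N) (hg1 : g ≠ 1)
    (hS : ∀ z ∈ S, stp g ν ((1 - g) * f1) ((1 - g) * f2) z ∈ S) (hf1 : f1 ≠ 0)
    (hP : ∀ z ∈ S, z.2 = 0 → f2 = 0) {z : ZMod p × ZMod p} (hz : z ∈ S) (hf : z.1 ≠ f1)
    (w : ZMod p) : (0, w) ∈ S := by
  have h1g : (1 : ZMod p) - g ≠ 0 := sub_ne_zero.2 (Ne.symm hg1)
  have hc : (1 - g) * f1 ≠ 0 := mul_ne_zero h1g hf1
  have hP' : ∀ z ∈ S, z.2 = 0 → (1 - g) * f2 = 0 := fun z hz h => by rw [hP z hz h, mul_zero]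
  obtain ⟨w0, hw0⟩ := reachCol G hS hc hP' hz (ne_aff hg1 hf)
  exact shift_all (P := fun y => (0, y) ∈ S) hw0 (neg_ne_zero.2 hc)
    (fun w hw => shiftCol G hS hc hP' hw) w

/-- A run along a line through the centre which meets no perturbation. -/
lemma line_run (hgen : ∀ a : ZMod p, a ≠ 0 → ∃ k, 1 ≤ k ∧ k ≤ N ∧ g ^ k = a)
    (hS : ∀ z ∈ S, stp g ν ((1 - g) * f1) ((1 - g) * f2) z ∈ S) {x y : ZMod p} (h0 : (x, y) ∈ S)
    (h : ∀ s : ZMod p, s ≠ 0 → (f1 + s * (x - f1) = 0 → f1 = 0) ∧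
      (f2 + s * (y - f2) = 0 → f2 = 0)) (s : ZMod p) (hs : s ≠ 0) :
    (f1 + s * (x - f1), f2 + s * (y - f2)) ∈ S := by
  obtain ⟨X, hX, hX0⟩ := exists_affSeq g ((1 - g) * f1) x
  obtain ⟨Y, hY, hY0⟩ := exists_affSeq g ((1 - g) * f2) y
  obtain ⟨k, k1, -, hk⟩ := hgen s hs
  have hg0 : g ≠ 0 := by
    rintro rfl
    rw [zero_pow (by omega)] at hk
    exact hs hk.symm
  have hh : ∀ i, (X i = 0 → (1 - g) * f1 = 0) ∧ (Y i = 0 → (1 - g) * f2 = 0) := by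
    intro i
    rw [aff_gen hX, aff_gen hY, hX0, hY0]
    obtain ⟨ha, hb⟩ := h (g ^ i) (pow_ne_zero _ hg0)
    exact ⟨fun h' => by rw [ha h', mul_zero], fun h' => by rw [hb h', mul_zero]⟩
  have hr := run hX hY hS (start_gen hX hY hS (by rw [hX0, hY0]; exact h0) (hh 0).2) (k - 1)
    (fun i _ _ _ => hh i)
  rw [Nat.sub_add_cancel k1] at hr
  have h2 : (if X k = 0 then (1 - g) * f1 else 0) = 0 := by
    split_ifs with h'
    · exact (hh k).1 h'
    · rfl
  rw [h2, sub_zero, aff_gen hX, aff_gen hY, hX0, hY0, hk] at hr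
  exact hr

lemma degenerate (G : Good g N) (hg1 : g ≠ 1) (hν : ν ≠ 0)
    (hgen : ∀ a : ZMod p, a ≠ 0 → ∃ k, 1 ≤ k ∧ k ≤ N ∧ g ^ k = a)
    (hS : ∀ z ∈ S, stp g ν ((1 - g) * f1) ((1 - g) * f2) z ∈ S) (hne : S.Nonempty)
    (hF : (f1, f2) ∉ S) (h0 : f1 = 0 ∨ f2 = 0) :
    (∃ x y : ZMod p, ¬ (x = 0 ∧ y = 0) ∧ ∀ s : ZMod p, s ≠ 0 → (s * x, s * y) ∈ S) ∨
    (f2 ≠ 0 ∧ ∀ x : ZMod p, x ≠ 0 → (x, f2) ∈ S) ∨ (∀ w : ZMod p, (w, 0) ∈ S) ∨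
    (f1 ≠ 0 ∧ ∀ y : ZMod p, y ≠ 0 → (f1, y) ∈ S) ∨ (∀ w : ZMod p, (0, w) ∈ S) := by
  obtain ⟨⟨x, y⟩, hz⟩ := hne
  by_cases h2 : f2 = 0
  · by_cases h1 : f1 = 0
    · left
      subst h1 h2
      refine ⟨x, y, ?_, fun s hs => ?_⟩
      · rintro ⟨rfl, rfl⟩; exact hF hz
      · simpa using line_run hgen hS hz (fun s hs => ⟨fun _ => rfl, fun _ => rfl⟩) s hs
    · by_cases hx : x = f1
      · subst hx h2
        right; right; right; left
        refine ⟨h1, fun y' hy' => ?_⟩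
        have hy : y ≠ 0 := by rintro rfl; exact hF hz
        have := line_run hgen hS hz (fun s hs => ⟨fun h => by simpa using h, fun _ => rfl⟩) (y' / y)
          (div_ne_zero hy' hy)
        simpa [hy] using this
      · right; right; right; right
        exact col_all G hg1 hS h1 (fun _ _ _ => h2) hz hx
  · have h1 : f1 = 0 := by tauto
    by_cases hy : y = f2
    · subst hy h1
      right; left
      refine ⟨h2, fun x' hx' => ?_⟩
      have hx : x ≠ 0 := by rintro rfl; exact hF hz
      have := line_run hgen hS hz (fun s hs => ⟨fun _ => rfl, fun h => by simpa using h⟩) (x' / x)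
        (div_ne_zero hx' hx)
      simpa [hx] using this
    · right; right; left
      exact row_all G hg1 hν hS h2 (fun _ _ _ => h1) hz hy

/-- One step of the induced Moebius map on row zero. -/
lemma moebius (G : Good g N) (hg1 : g ≠ 1)
    (hS : ∀ z ∈ S, stp g ν ((1 - g) * f1) ((1 - g) * f2) z ∈ S) (h1 : f1 ≠ 0) (h2 : f2 ≠ 0)
    {w : ZMod p} (hw : (w, 0) ∈ S) :
    (0, f2) ∈ S ∨ ∃ w', (w', 0) ∈ S ∧
      (w' - f1) * ((1 - g) * (w - f1 - ν * ((1 - g) * f2) / g) - f2) =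
        -f2 * (w - f1 - ν * ((1 - g) * f2) / g) := by
  have h1g : (1 : ZMod p) - g ≠ 0 := sub_ne_zero.2 (Ne.symm hg1)
  have hc1 : (1 - g) * f1 ≠ 0 := mul_ne_zero h1g h1
  have hc2 : (1 - g) * f2 ≠ 0 := mul_ne_zero h1g h2
  obtain ⟨Y, hY, hY0⟩ := exists_affSeq g ((1 - g) * f2) 0
  obtain ⟨X, hX, hX0⟩ := exists_affSeq g ((1 - g) * f1) (w - ν * ((1 - g) * f2) / g)
  by_cases hfix : w - ν * ((1 - g) * f2) / g = f1
  · right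
    have hXi : ∀ i, X i = f1 := fun i => by rw [aff_gen hX, hX0, hfix]; ring
    have h := run hX hY hS (start_row hX hY G.ne hS hw hX0 hY0) (N - 1) (fun i k1 k2 hm =>
      ⟨fun h => absurd h (by rw [hXi]; exact h1),
        fun h => absurd h (G.noret _ Y hc2 hY hY0 i k1 (by have := G.pos; omega))⟩)
    rw [Nat.sub_add_cancel G.pos, G.per _ _ hY, hY0, hXi, if_neg h1, sub_zero] at h
    refine ⟨f1, h, ?_⟩
    have : w - f1 - ν * ((1 - g) * f2) / g = 0 := by linear_combination hfix
    rw [this]; ring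
  · obtain ⟨k, hk, hkS⟩ := rowToCol G hS hc1 hc2 hX hY hw hX0 hY0
      (by rw [hX0]; exact ne_aff hg1 hfix)
    by_cases hy : Y k - (1 - g) * f1 = f2
    · left; rw [hy] at hkS; exact hkS
    right
    obtain ⟨Y', hY', hY0'⟩ := exists_affSeq g ((1 - g) * f2) (Y k - (1 - g) * f1)
    obtain ⟨X', hX', hX0'⟩ := exists_affSeq g ((1 - g) * f1) 0
    obtain ⟨j, hj, hjS⟩ := colToRow G hS hc1 hc2 hX' hY' (by rw [hX0', hY0']; exact hkS) hX0'
      (by rw [hY0']; exact ne_aff hg1 hy)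
    refine ⟨_, hjS, ?_⟩
    rw [aff_gen hX, hX0] at hk
    rw [aff_gen hY', hY0', aff_gen hY, hY0] at hj
    rw [aff_gen hX', hX0']
    generalize ν * ((1 - g) * f2) / g = δ at *
    linear_combination (w - f1 - δ) * hj + (g ^ j * f2) * hk

/-- Horizontal run. -/
lemma horizontal (G : Good g N) (hg1 : g ≠ 1)
    (hgen : ∀ a : ZMod p, a ≠ 0 → ∃ k, 1 ≤ k ∧ k ≤ N ∧ g ^ k = a)
    (hS : ∀ z ∈ S, stp g ν ((1 - g) * f1) ((1 - g) * f2) z ∈ S) (h1 : f1 ≠ 0) (h2 : f2 ≠ 0)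
    (h0 : (0, f2) ∈ S) (x : ZMod p) (hx : x ≠ 0) (hxf : x ≠ f1) : (x, f2) ∈ S := by
  have h1g : (1 : ZMod p) - g ≠ 0 := sub_ne_zero.2 (Ne.symm hg1)
  have hc1 : (1 - g) * f1 ≠ 0 := mul_ne_zero h1g h1
  obtain ⟨X, hX, hX0⟩ := exists_affSeq g ((1 - g) * f1) 0
  obtain ⟨Y, hY, hY0⟩ := exists_affSeq g ((1 - g) * f2) f2
  have hYi : ∀ i, Y i = f2 := fun i => by rw [aff_gen hY, hY0]; ring
  obtain ⟨k, k1, k2, hk⟩ := hgen ((f1 - x) / f1) (div_ne_zero (sub_ne_zero.2 (Ne.symm hxf)) h1)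
  have hXk : X k = x := by rw [aff_gen hX, hX0, hk]; field_simp; ring
  have h := run hX hY hS (start_gen hX hY hS (by rw [hX0, hY0]; exact h0)
    (fun h => absurd h (by rw [hY0]; exact h2))) (k - 1) (fun i i1 i2 _ =>
      ⟨fun h => absurd h (G.noret _ X hc1 hX hX0 i i1 (by omega)),
       fun h => absurd h (by rw [hYi]; exact h2)⟩)
  rw [Nat.sub_add_cancel k1, hXk, hYi, if_neg hx, sub_zero] at h
  exact h

lemma exists_row (G : Good g N) (hg1 : g ≠ 1)
    (hS : ∀ z ∈ S, stp g ν ((1 - g) * f1) ((1 - g) * f2) z ∈ S) (hne : S.Nonempty)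
    (hF : (f1, f2) ∉ S) (h1 : f1 ≠ 0) (h2 : f2 ≠ 0) : ∃ w, (w, 0) ∈ S := by
  by_contra hcon
  push Not at hcon
  obtain ⟨⟨x, y⟩, hz⟩ := hne
  by_cases hx : x = f1
  · subst hx
    have hy : y ≠ f2 := by rintro rfl; exact hF hz
    have h1g : (1 : ZMod p) - g ≠ 0 := sub_ne_zero.2 (Ne.symm hg1)
    have hc2 : (1 - g) * f2 ≠ 0 := mul_ne_zero h1g h2
    obtain ⟨X, hX, hX0⟩ := exists_affSeq g ((1 - g) * x) x
    obtain ⟨Y, hY, hY0⟩ := exists_affSeq g ((1 - g) * f2) y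
    have hXi : ∀ i, X i = x := fun i => by rw [aff_gen hX, hX0]; ring
    obtain ⟨k, k1, -, hk, hmin⟩ := G.hit _ Y hc2 hY (by rw [hY0]; exact ne_aff hg1 hy)
    have hy0 : y ≠ 0 := by rintro rfl; exact hcon _ hz
    have h := run hX hY hS (start_gen hX hY hS (by rw [hX0, hY0]; exact hz)
      (fun h => absurd h (by rw [hY0]; exact hy0))) (k - 1) (fun i i1 i2 _ =>
        ⟨fun h => absurd h (by rw [hXi]; exact h1), fun h => absurd h (hmin i i1 (by omega))⟩)
    rw [Nat.sub_add_cancel k1, hXi, hk, if_neg h1, sub_zero] at h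
    exact hcon _ h
  · exact hcon 0 (col_all G hg1 hS h1 (fun z hz h => absurd (h ▸ hz) (hcon z.1)) hz hx 0)

/-- The set of left vertices receiving the second new colour (or the omitted one). -/
def Bset (p : ℕ) : Set (ZMod p × ZMod p) :=
  {z | z.1 = 0 ∨ z.1 + z.2 = 1 ∨ (z.1 + z.2 = 0 ∧ z.2 * z.2 = 1)}

lemma alpha_case (G : Good g N) (hg1 : g ≠ 1) (hν : ν ≠ 0)
    (hgen : ∀ a : ZMod p, a ≠ 0 → ∃ k, 1 ≤ k ∧ k ≤ N ∧ g ^ k = a)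
    (hS : ∀ z ∈ S, stp g ν ((1 - g) * f1) ((1 - g) * f2) z ∈ S) (hne : S.Nonempty)
    (hF : (f1, f2) ∉ S) (hA : ∀ z ∈ S, z ∉ Bset p) : False := by
  by_cases h0 : f1 = 0 ∨ f2 = 0
  · rcases degenerate G hg1 hν hgen hS hne hF h0 with
      ⟨x, y, hxy, h⟩ | ⟨h2, h⟩ | h | ⟨h1, h⟩ | h
    · by_cases hx : x + y = 0
      · have hy : y ≠ 0 := by
          rintro rfl; exact hxy ⟨by simpa using hx, rfl⟩
        refine hA _ (h y⁻¹ (inv_ne_zero hy)) (Or.inr (Or.inr ⟨?_, ?_⟩))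
        · simp only; rw [← mul_add, hx, mul_zero]
        · simp [hy]
      · refine hA _ (h (x + y)⁻¹ (inv_ne_zero hx)) (Or.inr (Or.inl ?_))
        simp only; rw [← mul_add, inv_mul_cancel₀ hx]
    · by_cases h3 : f2 = 1
      · exact hA _ (h (-1) (by simp)) (Or.inr (Or.inr ⟨by simp [h3], by simp [h3]⟩))
      · exact hA _ (h (1 - f2) (sub_ne_zero.2 (Ne.symm h3))) (Or.inr (Or.inl (by simp)))
    · exact hA _ (h 0) (Or.inl rfl)
    · by_cases h3 : f1 = 1
      · exact hA _ (h (-1) (by simp)) (Or.inr (Or.inr ⟨by simp [h3], by simp⟩))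
      · exact hA _ (h (1 - f1) (sub_ne_zero.2 (Ne.symm h3))) (Or.inr (Or.inl (by simp)))
    · exact hA _ (h 0) (Or.inl rfl)
  · push Not at h0
    have hP : ∀ z ∈ S, z.1 = 0 → f1 = 0 := fun z hz h => absurd (Or.inl h) (hA z hz)
    obtain ⟨⟨x, y⟩, hz⟩ := hne
    by_cases hy : y = f2
    · subst hy
      have hx : x - f1 ≠ 0 := by
        intro h; rw [sub_eq_zero] at h; subst h; exact hF hz
      have hS' : ∀ z ∈ S ∩ {z | z.2 = y},
          stp g ν ((1 - g) * f1) ((1 - g) * y) z ∈ S ∩ {z | z.2 = y} := by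
        rintro z ⟨hzS, hzy⟩
        have hq := hS z hzS
        have hx' : (stp g ν ((1 - g) * f1) ((1 - g) * y) z).1 ≠ 0 := fun h => h0.1 (hP _ hq h)
        refine ⟨hq, ?_⟩
        simp only [stp] at hx'
        change z.2 = y at hzy
        change g * z.2 + (1 - g) * y - ite _ _ _ = y
        rw [if_neg hx', hzy]
        ring
      obtain ⟨w, hw⟩ := reachCol G hS' (mul_ne_zero (sub_ne_zero.2 (Ne.symm hg1)) h0.1)
        (fun z hz h => absurd (hz.2.symm.trans h) h0.2) (z := (x, y)) ⟨hz, rfl⟩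
        (ne_aff hg1 (sub_ne_zero.1 hx))
      exact hA _ hw.1 (Or.inl rfl)
    · exact hA _ (row_all G hg1 hν hS h0.2 hP hz hy 0) (Or.inl rfl)

/-- Avoiding four values. -/
lemma avoid (hp : 5 ≤ p) (a b c d : ZMod p) : ∃ x : ZMod p, x ≠ a ∧ x ≠ b ∧ x ≠ c ∧ x ≠ d := by
  classical
  have : ∃ x : ZMod p, x ∉ ({a, b, c, d} : Finset (ZMod p)) := by
    by_contra h
    push Not at h
    have h1 : Finset.univ ⊆ ({a, b, c, d} : Finset (ZMod p)) := fun x _ => h x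
    have h2 := Finset.card_le_card h1
    rw [Finset.card_univ, ZMod.card] at h2
    have h3 : ({a, b, c, d} : Finset (ZMod p)).card ≤ 4 := Finset.card_le_four
    omega
  obtain ⟨x, hx⟩ := this
  simp only [Finset.mem_insert, Finset.mem_singleton, not_or] at hx
  exact ⟨x, hx⟩

lemma beta_case {d q : ZMod p} (G : Good g N) (hg1 : g ≠ 1) (hν : ν ≠ 0) (hp : 5 ≤ p)
    (hνd : ν * (1 - g) ^ 2 = g * d) (hd : d * (q - 1) = 4) (hq : ¬ IsSquare q) (hq1 : q ≠ -1)
    (hgen : ∀ a : ZMod p, a ≠ 0 → ∃ k, 1 ≤ k ∧ k ≤ N ∧ g ^ k = a)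
    (hS : ∀ z ∈ S, stp g ν ((1 - g) * f1) ((1 - g) * f2) z ∈ S) (hne : S.Nonempty)
    (hF : (f1, f2) ∉ S) (hB : ∀ z ∈ S, z ∈ Bset p ∧ z ≠ (0, 1)) : False := by
  have h2' : (2 : ZMod p) ≠ 0 := by
    have : ((2 : ℕ) : ZMod p) ≠ 0 := by
      rw [Ne, ZMod.natCast_eq_zero_iff]; exact fun h => by have := Nat.le_of_dvd (by omega) h; omega
    simpa using this
  have h3' : (3 : ZMod p) ≠ 0 := by
    have : ((3 : ℕ) : ZMod p) ≠ 0 := by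
      rw [Ne, ZMod.natCast_eq_zero_iff]; exact fun h => by have := Nat.le_of_dvd (by omega) h; omega
    simpa using this
  have hrowB : ∀ w, (w, 0) ∈ S → w = 0 ∨ w = 1 := by
    intro w hw
    rcases (hB _ hw).1 with h | h | h
    · exact Or.inl h
    · right; simpa using h
    · simp at h
  have h1g : (1 : ZMod p) - g ≠ 0 := sub_ne_zero.2 (Ne.symm hg1)
  have hrow : ∀ f x : ZMod p, x ≠ 0 → x ≠ 1 - f → x ≠ -f → (x, f) ∉ S := by
    intro f x a b c hm
    rcases (hB _ hm).1 with h | h | h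
    · exact a h
    · exact b (by linear_combination h)
    · exact c (by linear_combination h.1)
  by_cases h0 : f1 = 0 ∨ f2 = 0
  · rcases degenerate G hg1 hν hgen hS hne hF h0 with
      ⟨x, y, hxy, h⟩ | ⟨h2, h⟩ | h | ⟨h1, h⟩ | h
    · by_cases hx0 : x = 0
      · subst hx0
        have hy : y ≠ 0 := fun h => hxy ⟨rfl, h⟩
        exact (hB _ (h y⁻¹ (inv_ne_zero hy))).2 (by simp [hy])
      by_cases hx : x + y = 0
      · have hy : y ≠ 0 := by
          rintro rfl; exact hxy ⟨by simpa using hx, rfl⟩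
        have hxe : x = -y := by linear_combination hx
        subst hxe
        rcases (hB _ (h (2 * y⁻¹) (mul_ne_zero h2' (inv_ne_zero hy)))).1 with h | h | h
        · simp [hy, h2'] at h
        · simp [hy] at h
        · have := h.2
          simp [hy] at this
          exact h3' (by linear_combination this)
      · rcases (hB _ (h (2 * (x + y)⁻¹) (mul_ne_zero h2' (inv_ne_zero hx)))).1 with h | h | h
        · simp [hx, h2', hx0] at h
        · simp only at h
          rw [← mul_add, mul_assoc, inv_mul_cancel₀ hx] at h
          exact one_ne_zero (α := ZMod p) (by linear_combination h)
        · have := h.1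
          simp only at this
          rw [← mul_add, mul_assoc, inv_mul_cancel₀ hx] at this
          exact h2' (by linear_combination this)
    · obtain ⟨x, x1, x2, x3, -⟩ := avoid hp 0 (1 - f2) (-f2) 0
      exact hrow _ _ x1 x2 x3 (h x x1)
    · obtain ⟨x, x1, x2, x3, -⟩ := avoid hp 0 (1 - 0) (-0) 0
      exact hrow _ _ x1 x2 x3 (h x)
    · obtain ⟨y, y1, y2, y3, -⟩ := avoid hp 0 (1 - f1) (-f1) 0
      exact hrow y f1 h1 (fun h => y2 (by linear_combination h))
        (fun h => y3 (by linear_combination h)) (h y y1)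
    · exact (hB _ (h 1)).2 rfl
  · push Not at h0
    obtain ⟨h1, h2⟩ := h0
    obtain ⟨w, hw⟩ := exists_row G hg1 hS hne hF h1 h2
    have hnoinf : (0, f2) ∉ S := by
      intro hinf
      obtain ⟨x, x1, x2, x3, x4⟩ := avoid hp 0 (1 - f2) (-f2) f1
      exact hrow _ _ x1 x2 x3 (horizontal G hg1 hgen hS h1 h2 hinf x x1 x4)
    have hg0 := G.ne
    have hd0 : d ≠ 0 := by
      rintro rfl
      exact mul_ne_zero h2' h2' (by linear_combination -hd)
    have hdel : (1 - g) * (ν * ((1 - g) * f2) / g) = d * f2 := by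
      field_simp; linear_combination hνd
    have hstep : ∀ w, (w, 0) ∈ S → ∃ w', (w', 0) ∈ S ∧
      (w' - f1) * ((1 - g) * (w - f1 - ν * ((1 - g) * f2) / g) - f2) =
        -f2 * (w - f1 - ν * ((1 - g) * f2) / g) := fun w hw =>
      (moebius G hg1 hS h1 h2 hw).resolve_left hnoinf
    -- no fixed points
    have hnofix : ∀ w, ¬ ((w - f1) * ((1 - g) * (w - f1 - ν * ((1 - g) * f2) / g) - f2) =
        -f2 * (w - f1 - ν * ((1 - g) * f2) / g)) := by
      intro w h
      apply hq
      generalize ν * ((1 - g) * f2) / g = δ at *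
      refine ⟨(2 * ((1 - g) * (w - f1)) - d * f2) / (d * f2), ?_⟩
      field_simp
      linear_combination -4 * ((1 - g) * h + ((1 - g) * (w - f1) + f2) * hdel) + d * f2 ^ 2 * hd
    have hno2 : ∀ a b : ZMod p, a ≠ b →
        ((b - f1) * ((1 - g) * (a - f1 - ν * ((1 - g) * f2) / g) - f2) =
        -f2 * (a - f1 - ν * ((1 - g) * f2) / g)) →
        ((a - f1) * ((1 - g) * (b - f1 - ν * ((1 - g) * f2) / g) - f2) =
        -f2 * (b - f1 - ν * ((1 - g) * f2) / g)) → False := by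
      intro a b hab hA hB
      generalize ν * ((1 - g) * f2) / g = δ at *
      have : (a - b) * (f2 * (d + 2)) = 0 := by
        linear_combination hA - hB - (a - b) * hdel
      have hd2 : d = -2 := by
        rcases mul_eq_zero.1 this with h | h
        · exact absurd (sub_eq_zero.1 h) hab
        · rcases mul_eq_zero.1 h with h | h
          · exact absurd h h2
          · linear_combination h
      rw [hd2] at hd
      apply hq1
      have : (2 : ZMod p) * (q + 1) = 0 := by linear_combination -hd
      rcases mul_eq_zero.1 this with h | h
      · exact absurd h h2'
      · linear_combination h
    obtain ⟨w', hw', hR⟩ := hstep w hw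
    obtain ⟨w'', hw'', hR'⟩ := hstep w' hw'
    have e1 : w ≠ w' := by rintro rfl; exact hnofix _ hR
    have e2 : w' ≠ w'' := by rintro rfl; exact hnofix _ hR'
    have e3 : w'' = w := by
      rcases hrowB _ hw with h | h <;> rcases hrowB _ hw' with h' | h' <;>
        rcases hrowB _ hw'' with h'' | h'' <;> simp_all
    subst e3
    exact hno2 _ _ e1 hR hR'

end Qmap


section Colour
variable {p : ℕ} [Fact p.Prime]

lemma pof_all {ν D1 D2 : ZMod p} (hν : ¬ IsSquare ν) (hD : ¬ (D1 = 0 ∧ D2 = 0))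
    {S : Set (ZMod p × ZMod p)} (hS : ∀ z ∈ S, stp 1 ν D1 D2 z ∈ S) (hne : S.Nonempty)
    (z : ZMod p × ZMod p) : z ∈ S := by
  have hinj : Function.Injective (stp 1 ν D1 D2) := by
    rintro ⟨x, y⟩ ⟨x', y'⟩ h
    have h1 := congrArg Prod.fst h
    have h2 := congrArg Prod.snd h
    simp only [stp] at h1 h2
    rw [h1] at h2
    have hy : y = y' := by linear_combination h2
    subst hy
    have hx : x = x' := by linear_combination h1
    rw [hx]
  have himg : stp 1 ν D1 D2 '' S = S :=
    Set.eq_of_subset_of_ncard_le (Set.image_subset_iff.2 hS)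
      (Set.ncard_image_of_injective S hinj).ge (Set.toFinite S)
  by_contra hz
  refine pof (S := Sᶜ) hν hD ?_ ⟨z, hz⟩ (pof hν hD hS hne)
  intro a ha hb
  obtain ⟨s, hs, hsa⟩ : stp 1 ν D1 D2 a ∈ stp 1 ν D1 D2 '' S := by rw [himg]; exact hb
  exact ha (hinj hsa ▸ hs)

/-- The old colouring: a perfect one-factorization. -/
def colr (n : ZMod p) (a b : ZMod p × ZMod p) : ZMod p × ZMod p :=
  if a.1 = 0 then
    if b.1 = 0 then ((a.2 - b.2) / (n - 1), a.2 + (a.2 - b.2) / (n - 1))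
    else (b.2, a.2 + b.1 + b.2)
  else
    if b.1 = 0 then ((a.2 - b.2) / n + a.1, a.2)
    else (b.2 + a.1, a.2 + b.1)

lemma colr_snd (n : ZMod p) (a b : ZMod p × ZMod p) :
    (colr n a b).2 = a.2 + b.1 + if a.1 = 0 then (colr n a b).1 else 0 := by
  unfold colr
  split_ifs with h1 h2 h3 <;> simp [*]

lemma colr_ne {n : ZMod p} {a b : ZMod p × ZMod p} (h : b.1 ≠ 0) :
    (colr n a b).1 = b.2 + a.1 := by
  unfold colr
  split_ifs with h1 <;> simp [*]

lemma colr_eq {n : ZMod p} (hn0 : n ≠ 0) (hn1 : n ≠ 1) {a b : ZMod p × ZMod p} (h : b.1 = 0) :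
    b.2 = (colr n a b).2 - n * ((colr n a b).1 - a.1) := by
  have h1 : n - 1 ≠ 0 := sub_ne_zero.2 hn1
  unfold colr
  split_ifs with h1
  · rw [h1]; field_simp; ring
  · field_simp; ring

variable {n g : ZMod p}

lemma colr_left (hn0 : n ≠ 0) (hn1 : n ≠ 1) {a b b' : ZMod p × ZMod p}
    (h : colr n a b = colr n a b') : b = b' := by
  have s1 := colr_snd n a b
  have s2 := colr_snd n a b'
  rw [h] at s1
  have e1 : b.1 = b'.1 := by linear_combination s2 - s1
  refine Prod.ext e1 ?_
  by_cases h0 : b.1 = 0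
  · rw [colr_eq hn0 hn1 (a := a) h0, colr_eq hn0 hn1 (a := a) (e1 ▸ h0 : b'.1 = 0), h]
  · have t1 := colr_ne (n := n) (a := a) h0
    have t2 := colr_ne (n := n) (a := a) (e1 ▸ h0 : b'.1 ≠ 0)
    rw [h] at t1
    linear_combination t2 - t1

lemma colr_right (hn0 : n ≠ 0) (hn1 : n ≠ 1) {a a' b : ZMod p × ZMod p}
    (h : colr n a b = colr n a' b) : a = a' := by
  have e1 : a.1 = a'.1 := by
    by_cases h0 : b.1 = 0
    · have t1 := colr_eq hn0 hn1 (a := a) h0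
      have t2 := colr_eq hn0 hn1 (a := a') h0
      rw [h] at t1
      have : n * (a.1 - a'.1) = 0 := by linear_combination t2 - t1
      exact sub_eq_zero.1 ((mul_eq_zero.1 this).resolve_left hn0)
    · have t1 := colr_ne (n := n) (a := a) h0
      have t2 := colr_ne (n := n) (a := a') h0
      rw [h] at t1
      linear_combination t2 - t1
  refine Prod.ext e1 ?_
  have s1 := colr_snd n a b
  have s2 := colr_snd n a' b
  rw [h, e1] at s1
  linear_combination s2 - s1

/-- The transversal. -/
def trv (n g : ZMod p) (a : ZMod p × ZMod p) : ZMod p × ZMod p :=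
  (-g * a.2, if a.2 = 0 then n * g * a.1 else -g * a.1)

lemma trv_inj (hn0 : n ≠ 0) (hg0 : g ≠ 0) {a b : ZMod p × ZMod p} (h : trv n g a = trv n g b) :
    a = b := by
  have h1 := congrArg Prod.fst h
  have h2 := congrArg Prod.snd h
  simp only [trv] at h1 h2
  have e : a.2 = b.2 := mul_left_cancel₀ (neg_ne_zero.2 hg0) h1
  rw [e] at h2
  refine Prod.ext ?_ e
  split_ifs at h2 with h0
  · exact mul_left_cancel₀ (mul_ne_zero hn0 hg0) h2
  · exact mul_left_cancel₀ (neg_ne_zero.2 hg0) h2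

lemma colr_trv (hn0 : n ≠ 0) (hg0 : g ≠ 0) (a : ZMod p × ZMod p) :
    colr n a (trv n g a) = ((1 - g) * a.1, (1 - g) * a.2) := by
  obtain ⟨x, y⟩ := a
  by_cases hx : x = 0 <;> by_cases hy : y = 0 <;> simp [colr, trv, hx, hy, hg0]
  · ring
  · field_simp; ring
  · constructor <;> ring

lemma colr_stp (hn0 : n ≠ 0) (hn1 : n ≠ 1) (hg0 : g ≠ 0) {a a' c : ZMod p × ZMod p}
    (h : colr n a' (trv n g a) = c) : a' = stp g n⁻¹ c.1 c.2 a := by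
  have s := colr_snd n a' (trv n g a)
  rw [h] at s
  have e1 : a'.1 = g * a.1 + c.1 - (if a.2 = 0 then n⁻¹ * c.2 else 0) := by
    by_cases h0 : a.2 = 0
    · have t := colr_eq hn0 hn1 (a := a') (b := trv n g a) (by simp [trv, h0])
      rw [h] at t
      simp only [trv, h0, if_true] at t ⊢
      field_simp
      linear_combination -t
    · have t := colr_ne (n := n) (a := a') (b := trv n g a) (by simp [trv, h0, hg0])
      rw [h] at t
      simp only [trv, h0, if_false] at t ⊢
      linear_combination -t
  refine Prod.ext e1 ?_
  simp only [stp]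
  rw [← e1]
  simp only [trv] at s
  linear_combination -s

lemma old_old (hn : ¬ IsSquare n) {c c' : ZMod p × ZMod p} (hc : c ≠ c')
    {S : Set (ZMod p × ZMod p)} (hne : S.Nonempty)
    (hS : ∀ a ∈ S, ∃ b, colr n a b = c ∧ ∃ a' ∈ S, colr n a' b = c') (z : ZMod p × ZMod p) :
    z ∈ S := by
  have hn0 : n ≠ 0 := by rintro rfl; exact hn (by simp)
  have hn1 : n ≠ 1 := by rintro rfl; exact hn (by simp)
  have hν : ¬ IsSquare n⁻¹ := by rwa [isSquare_inv]
  have hD : ¬ (c'.1 - c.1 = 0 ∧ c'.2 - c.2 = 0) := by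
    rintro ⟨h1, h2⟩
    exact hc (Prod.ext (sub_eq_zero.1 h1).symm (sub_eq_zero.1 h2).symm)
  let ψ : ZMod p × ZMod p → ZMod p × ZMod p := fun a =>
    (a.1, a.2 - c.2 + if a.1 = 0 then c.1 else 0)
  have hψ : ∀ a b, ψ a = ψ b → a = b := by
    intro a b h
    have h1 := congrArg Prod.fst h
    have h2 := congrArg Prod.snd h
    simp only [ψ] at h1 h2
    rw [h1] at h2
    exact Prod.ext h1 (by linear_combination h2)
  have hall := pof_all hν hD (S := ψ '' S) ?_ (hne.image _) (ψ z)
  · obtain ⟨s, hs, hsz⟩ := hall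
    exact hψ _ _ hsz ▸ hs
  rintro _ ⟨a, ha, rfl⟩
  obtain ⟨b, hb, a', ha', hb'⟩ := hS a ha
  refine ⟨a', ha', ?_⟩
  have s1 := colr_snd n a b
  have s2 := colr_snd n a' b
  rw [hb] at s1
  rw [hb'] at s2
  have hy : (ψ a).2 = - b.1 := by
    simp only [ψ]; linear_combination -s1
  have e1 : a'.1 = 1 * a.1 + (c'.1 - c.1) -
      (if (ψ a).2 = 0 then n⁻¹ * (c'.2 - c.2) else 0) := by
    rw [hy]
    by_cases h0 : b.1 = 0
    · have t1 := colr_eq hn0 hn1 (a := a) h0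
      have t2 := colr_eq hn0 hn1 (a := a') h0
      rw [hb] at t1
      rw [hb'] at t2
      simp only [h0, neg_zero, if_true]
      field_simp
      linear_combination t1 - t2
    · have t1 := colr_ne (n := n) (a := a) h0
      have t2 := colr_ne (n := n) (a := a') h0
      rw [hb] at t1
      rw [hb'] at t2
      rw [if_neg (neg_ne_zero.2 h0)]
      linear_combination t1 - t2
  refine Prod.ext e1 ?_
  simp only [stp]
  have e2 : (ψ a).1 = a.1 := rfl
  rw [e2, ← e1, hy]
  change a'.2 - c.2 + _ = _
  split_ifs with h0
  · rw [if_pos h0] at s2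
    linear_combination -s2
  · rw [if_neg h0] at s2
    linear_combination -s2

end Colour

section Graph

/-- Reduction of the graph statement to a statement about closed sets of left vertices. -/
lemma graph_part {m k : ℕ} (hk : 0 < k) (C0 : Fin m → Fin m → Fin k)
    (hl : ∀ a b b', C0 a b = C0 a b' → b = b') (hr : ∀ a a' b, C0 a b = C0 a' b → a = a')
    (hac : ∀ c c', c ≠ c' → ∀ S : Set (Fin m), S.Nonempty →
      (∀ a ∈ S, ∃ b, C0 a b = c ∧ ∃ a' ∈ S, C0 a' b = c') →
      (∀ a ∈ S, ∃ b, C0 a b = c' ∧ ∃ a' ∈ S, C0 a' b = c) → False) :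
    ∃ C : (completeBipartiteGraph (Fin m) (Fin m)).edgeSet → Fin k,
      IsProperEdgeColoring (completeBipartiteGraph (Fin m) (Fin m)) C ∧
      IsAcyclicEdgeColoring (completeBipartiteGraph (Fin m) (Fin m)) C := by
  let f : Fin m ⊕ Fin m → Fin m ⊕ Fin m → Fin k := fun u v =>
    match u, v with
    | Sum.inl a, Sum.inr b => C0 a b
    | Sum.inr b, Sum.inl a => C0 a b
    | Sum.inl _, Sum.inl _ => ⟨0, hk⟩
    | Sum.inr _, Sum.inr _ => ⟨0, hk⟩
  have hf : ∀ u v, f u v = f v u := by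
    rintro (a | a) (b | b) <;> rfl
  let F : Sym2 (Fin m ⊕ Fin m) → Fin k := Sym2.lift ⟨f, hf⟩
  have hF : ∀ u v, F s(u, v) = f u v := fun u v => rfl
  have hstar : ∀ v u u', (completeBipartiteGraph (Fin m) (Fin m)).Adj v u →
      (completeBipartiteGraph (Fin m) (Fin m)).Adj v u' → f v u = f v u' → u = u' := by
    rintro (v | v) (u | u) (u' | u') h1 h2 h
    · simp at h1
    · simp at h1
    · simp at h2
    · exact congrArg Sum.inr (hl _ _ _ h)
    · exact congrArg Sum.inl (hr _ _ _ h)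
    · simp at h2
    · simp at h1
    · simp at h1
  refine ⟨fun e => F e, ?_, ?_⟩
  · rintro ⟨e, he⟩ ⟨e', he'⟩ hne ⟨v, hv, hv'⟩ hC
    obtain ⟨u, rfl⟩ := Sym2.mem_iff_exists.1 hv
    obtain ⟨u', rfl⟩ := Sym2.mem_iff_exists.1 hv'
    exact hne (by rw [Subtype.mk.injEq, hstar v u u' he he' hC])
  · rintro v w hw ⟨c₁, c₂, hc⟩
    have key : ∀ u ∈ w.support, c₁ ≠ c₂ ∧
        (∃ x, x ∈ w.support ∧ (completeBipartiteGraph (Fin m) (Fin m)).Adj u x ∧ f u x = c₁) ∧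
        (∃ x, x ∈ w.support ∧ (completeBipartiteGraph (Fin m) (Fin m)).Adj u x ∧ f u x = c₂) := by
      intro u hu
      have h2 := hw.ncard_neighborSet_toSubgraph_eq_two hu
      obtain ⟨x, y, hxy, hN⟩ := Set.ncard_eq_two.1 h2
      have hx : w.toSubgraph.Adj u x := by
        have : x ∈ w.toSubgraph.neighborSet u := by rw [hN]; simp
        exact this
      have hy : w.toSubgraph.Adj u y := by
        have : y ∈ w.toSubgraph.neighborSet u := by rw [hN]; simp
        exact this
      have hx' : s(u, x) ∈ w.edges := by
        rw [← SimpleGraph.Walk.mem_edges_toSubgraph]; exact hx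
      have hy' : s(u, y) ∈ w.edges := by
        rw [← SimpleGraph.Walk.mem_edges_toSubgraph]; exact hy
      have hxs := w.snd_mem_support_of_mem_edges hx'
      have hys := w.snd_mem_support_of_mem_edges hy'
      have cx : f u x = c₁ ∨ f u x = c₂ := hc _ hx'
      have cy : f u y = c₁ ∨ f u y = c₂ := hc _ hy'
      have hd : f u x ≠ f u y := fun h => hxy (hstar u x y hx.adj_sub hy.adj_sub h)
      rcases cx with cx | cx <;> rcases cy with cy | cy
      · exact absurd (cx.trans cy.symm) hd
      · exact ⟨fun h => hd (cx.trans (h.trans cy.symm)), ⟨x, hxs, hx.adj_sub, cx⟩,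
          ⟨y, hys, hy.adj_sub, cy⟩⟩
      · exact ⟨fun h => hd (cx.trans (h.symm.trans cy.symm)), ⟨y, hys, hy.adj_sub, cy⟩,
          ⟨x, hxs, hx.adj_sub, cx⟩⟩
      · exact absurd (cx.trans cy.symm) hd
    have hadjl : ∀ (a : Fin m) x, (completeBipartiteGraph (Fin m) (Fin m)).Adj (Sum.inl a) x →
        ∃ b, x = Sum.inr b := by
      rintro a (x | x) h
      · simp at h
      · exact ⟨x, rfl⟩
    have hadjr : ∀ (a : Fin m) x, (completeBipartiteGraph (Fin m) (Fin m)).Adj (Sum.inr a) x →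
        ∃ b, x = Sum.inl b := by
      rintro a (x | x) h
      · exact ⟨x, rfl⟩
      · simp at h
    refine hac c₁ c₂ (key v w.start_mem_support).1 {a | Sum.inl a ∈ w.support} ?_ ?_ ?_
    · have hv := w.start_mem_support
      obtain ⟨-, ⟨x, hx, hadj, -⟩, -⟩ := key v hv
      rcases v with a | a
      · exact ⟨a, hv⟩
      · obtain ⟨b, rfl⟩ := hadjr _ _ hadj
        exact ⟨b, hx⟩
    · intro a ha
      obtain ⟨-, ⟨x, hx, hadj, hcx⟩, -⟩ := key _ ha
      obtain ⟨b, rfl⟩ := hadjl _ _ hadj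
      obtain ⟨-, -, ⟨y, hy, hadj', hcy⟩⟩ := key _ hx
      obtain ⟨a', rfl⟩ := hadjr _ _ hadj'
      exact ⟨b, hcx, a', hy, hcy⟩
    · intro a ha
      obtain ⟨-, -, ⟨x, hx, hadj, hcx⟩⟩ := key _ ha
      obtain ⟨b, rfl⟩ := hadjl _ _ hadj
      obtain ⟨-, ⟨y, hy, hadj', hcy⟩, -⟩ := key _ hx
      obtain ⟨a', rfl⟩ := hadjr _ _ hadj'
      exact ⟨b, hcx, a', hy, hcy⟩

end Graph

section Final
variable {p : ℕ} [Fact p.Prime]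

open Classical in
/-- The final colouring. -/
noncomputable def fcol (n g : ZMod p) (a b : ZMod p × ZMod p) : (ZMod p × ZMod p) ⊕ Bool :=
  if b = trv n g a ∧ a ≠ (0, 1) then Sum.inr (decide (a ∈ Bset p)) else Sum.inl (colr n a b)

lemma fcol_inl {n g : ZMod p} {a b c : ZMod p × ZMod p} (h : fcol n g a b = Sum.inl c) :
    colr n a b = c ∧ (b = trv n g a → a = (0, 1)) := by
  unfold fcol at h
  split_ifs at h with h1
  refine ⟨by simpa using h, fun h2 => ?_⟩
  by_contra h3
  exact h1 ⟨h2, h3⟩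

lemma fcol_inr {n g : ZMod p} {a b : ZMod p × ZMod p} {t : Bool} (h : fcol n g a b = Sum.inr t) :
    b = trv n g a ∧ a ≠ (0, 1) ∧ (t = true ↔ a ∈ Bset p) := by
  unfold fcol at h
  split_ifs at h with h1
  refine ⟨h1.1, h1.2, ?_⟩
  rw [Sum.inr.injEq] at h
  rw [← h]; simp

lemma fcol_main (hp : 5 ≤ p) : ∃ C : ZMod p × ZMod p → ZMod p × ZMod p → (ZMod p × ZMod p) ⊕ Bool,
    (∀ a b b', C a b = C a b' → b = b') ∧ (∀ a a' b, C a b = C a' b → a = a') ∧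
    (∀ c c', c ≠ c' → ∀ S : Set (ZMod p × ZMod p), S.Nonempty →
      (∀ a ∈ S, ∃ b, C a b = c ∧ ∃ a' ∈ S, C a' b = c') →
      (∀ a ∈ S, ∃ b, C a b = c' ∧ ∃ a' ∈ S, C a' b = c) → False) := by
  obtain ⟨g, hg0, hg1, hgs, G, hgen⟩ := exists_prim hp
  obtain ⟨q, r, hq, hqr, hq1⟩ := exists_q hp
  have h2' : (2 : ZMod p) ≠ 0 := by
    have : ((2 : ℕ) : ZMod p) ≠ 0 := by
      rw [Ne, ZMod.natCast_eq_zero_iff]; exact fun h => by have := Nat.le_of_dvd (by omega) h; omega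
    simpa using this
  have h1g : (1 : ZMod p) - g ≠ 0 := sub_ne_zero.2 (Ne.symm hg1)
  have hr0 : r ≠ 0 := by
    rintro rfl
    apply hq
    rw [show q = 1 by linear_combination hqr]; simp
  obtain ⟨n, hn⟩ : ∃ n, n = ((1 - g) * r / 2) ^ 2 / g := ⟨_, rfl⟩
  have hns : ¬ IsSquare n := by
    rintro ⟨s, hs⟩
    apply hgs
    have hs0 : s ≠ 0 := by
      rintro rfl
      rw [mul_zero, hn] at hs
      have : ((1 - g) * r / 2) ^ 2 / g ≠ 0 := div_ne_zero (pow_ne_zero 2 (div_ne_zero (mul_ne_zero h1g hr0) h2')) hg0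
      exact this hs
    refine ⟨((1 - g) * r / 2) / s, ?_⟩
    rw [hn] at hs
    field_simp at hs ⊢
    linear_combination -hs
  have hn0 : n ≠ 0 := by rintro rfl; exact hns (by simp)
  have hn1 : n ≠ 1 := by rintro rfl; exact hns (by simp)
  have hν0 : n⁻¹ ≠ 0 := inv_ne_zero hn0
  have hνd : n⁻¹ * (1 - g) ^ 2 = g * (4 / (r * r)) := by
    rw [hn]; field_simp; ring
  have hd : (4 / (r * r)) * (q - 1) = 4 := by
    rw [hqr]; field_simp
  have mixed : ∀ (c : ZMod p × ZMod p) (t : Bool) (S : Set (ZMod p × ZMod p)), S.Nonempty →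
      (∀ a ∈ S, ∃ b, fcol n g a b = Sum.inr t ∧ ∃ a' ∈ S, fcol n g a' b = Sum.inl c) → False := by
    intro c t S hne hS
    have hc1 : (1 - g) * (c.1 / (1 - g)) = c.1 := by field_simp
    have hc2 : (1 - g) * (c.2 / (1 - g)) = c.2 := by field_simp
    have hcl : ∀ z ∈ S, stp g n⁻¹ ((1 - g) * (c.1 / (1 - g))) ((1 - g) * (c.2 / (1 - g))) z ∈ S := by
      intro z hz
      rw [hc1, hc2]
      obtain ⟨b, hb, a', ha', hb'⟩ := hS z hz
      obtain ⟨rfl, -, -⟩ := fcol_inr hb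
      rw [← colr_stp hn0 hn1 hg0 (fcol_inl hb').1]
      exact ha'
    have hF : (c.1 / (1 - g), c.2 / (1 - g)) ∉ S := by
      intro hz
      obtain ⟨b, hb, a', ha', hb'⟩ := hS _ hz
      obtain ⟨rfl, h01, -⟩ := fcol_inr hb
      have e := colr_trv hn0 hg0 (c.1 / (1 - g), c.2 / (1 - g))
      simp only [hc1, hc2] at e
      have := colr_right hn0 hn1 ((fcol_inl hb').1.trans e.symm)
      subst this
      rw [hb] at hb'
      simp at hb'
    cases t with
    | false =>
      refine alpha_case G hg1 hν0 hgen hcl hne hF (fun z hz hzB => ?_)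
      obtain ⟨b, hb, -⟩ := hS z hz
      exact absurd ((fcol_inr hb).2.2.2 hzB) (by simp)
    | true =>
      refine beta_case G hg1 hν0 hp hνd hd hq hq1 hgen hcl hne hF (fun z hz => ?_)
      obtain ⟨b, hb, -⟩ := hS z hz
      exact ⟨(fcol_inr hb).2.2.1 rfl, (fcol_inr hb).2.1⟩
  refine ⟨fcol n g, ?_, ?_, ?_⟩
  · intro a b b' h
    cases hb : fcol n g a b' with
    | inl c =>
      exact colr_left hn0 hn1 ((fcol_inl (h.trans hb)).1.trans (fcol_inl hb).1.symm)
    | inr t =>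
      exact (fcol_inr (h.trans hb)).1.trans (fcol_inr hb).1.symm
  · intro a a' b h
    cases hb : fcol n g a' b with
    | inl c =>
      exact colr_right hn0 hn1 ((fcol_inl (h.trans hb)).1.trans (fcol_inl hb).1.symm)
    | inr t =>
      exact trv_inj hn0 hg0 ((fcol_inr (h.trans hb)).1.symm.trans (fcol_inr hb).1)
  · rintro (c | t) (c' | t') hne S hSne h1 h2
    · have hcc : c ≠ c' := fun h => hne (by rw [h])
      have hall := old_old hns hcc hSne (fun a ha => by
        obtain ⟨b, hb, a', ha', hb'⟩ := h1 a ha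
        exact ⟨b, (fcol_inl hb).1, a', ha', (fcol_inl hb').1⟩)
      have hz : ∀ e e' : ZMod p × ZMod p, (∀ a ∈ S, ∃ b, fcol n g a b = Sum.inl e ∧
          ∃ a' ∈ S, fcol n g a' b = Sum.inl e') → e = ((1 - g) * 0, (1 - g) * 1) := by
        intro e e' h
        obtain ⟨b, hb, -⟩ := h (e.1 / (1 - g), e.2 / (1 - g)) (hall _)
        have e1 := colr_trv hn0 hg0 (e.1 / (1 - g), e.2 / (1 - g))
        rw [mul_div_cancel₀ _ h1g, mul_div_cancel₀ _ h1g] at e1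
        have hbt := colr_left hn0 hn1 ((fcol_inl hb).1.trans e1.symm)
        have h01 := (fcol_inl hb).2 hbt
        rw [Prod.mk.injEq] at h01
        refine Prod.ext ?_ ?_
        · have := h01.1
          rw [div_eq_iff h1g] at this
          linear_combination this
        · have := h01.2
          rw [div_eq_iff h1g] at this
          linear_combination this
      exact hcc ((hz c c' h1).trans (hz c' c h2).symm)
    · exact mixed c t' S hSne h2
    · exact mixed c' t S hSne h1
    · obtain ⟨a, ha⟩ := hSne
      obtain ⟨b, hb, a', ha', hb'⟩ := h1 a ha
      have := trv_inj hn0 hg0 ((fcol_inr hb).1.symm.trans (fcol_inr hb').1)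
      subst this
      exact hne (hb.symm.trans hb')

end Final

/-- For every odd prime `p ≥ 5`, `K_{p²,p²}` admits an acyclic proper edge coloring
using `p² + 2` colors. -/
theorem stmt2 (p : ℕ) (hp : p.Prime) (hodd : Odd p) (hp5 : 5 ≤ p) :
    ∃ C : (completeBipartiteGraph (Fin (p ^ 2)) (Fin (p ^ 2))).edgeSet → Fin (p ^ 2 + 2),
      IsProperEdgeColoring (completeBipartiteGraph (Fin (p ^ 2)) (Fin (p ^ 2))) C ∧
      IsAcyclicEdgeColoring (completeBipartiteGraph (Fin (p ^ 2)) (Fin (p ^ 2))) C := by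
  haveI : Fact p.Prime := ⟨hp⟩
  obtain ⟨C, hl, hr, hac⟩ := fcol_main hp5
  have e : Fin (p ^ 2) ≃ ZMod p × ZMod p := Fintype.equivOfCardEq (by
    rw [Fintype.card_fin, Fintype.card_prod, ZMod.card]; ring)
  have eC : (ZMod p × ZMod p) ⊕ Bool ≃ Fin (p ^ 2 + 2) := Fintype.equivOfCardEq (by
    rw [Fintype.card_fin, Fintype.card_sum, Fintype.card_prod, ZMod.card, Fintype.card_bool]; ring)
  have tr : ∀ (c c' : Fin (p ^ 2 + 2)) (S : Set (Fin (p ^ 2))),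
      (∀ a ∈ S, ∃ b, eC (C (e a) (e b)) = c ∧ ∃ a' ∈ S, eC (C (e a') (e b)) = c') →
      ∀ a ∈ e '' S, ∃ b, C a b = eC.symm c ∧ ∃ a' ∈ e '' S, C a' b = eC.symm c' := by
    rintro c c' S h _ ⟨a, ha, rfl⟩
    obtain ⟨b, hb, a', ha', hb'⟩ := h a ha
    exact ⟨e b, by rw [← hb]; simp, e a', ⟨a', ha', rfl⟩, by rw [← hb']; simp⟩
  refine graph_part (by positivity) (fun a b => eC (C (e a) (e b))) ?_ ?_ ?_
  · intro a b b' h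
    exact e.injective (hl _ _ _ (eC.injective h))
  · intro a a' b h
    exact e.injective (hr _ _ _ (eC.injective h))
  · intro c c' hne S hSne h1 h2
    exact hac (eC.symm c) (eC.symm c') (fun h => hne (eC.symm.injective h)) (e '' S)
      (hSne.image _) (tr c c' S h1) (tr c' c S h2)
end

section
/- For every odd prime p, the acyclic chromatic index of the complete bipartite graph K_{p,p} equals p + 2. -/
open SimpleGraph

/-- Combinatorial reformulation of an acyclic proper coloring of the complete bipartite graph. -/
def GoodCol {A K : Type*} (F : A → A → K) : Prop :=
  (∀ x y y', F x y = F x y' → y = y') ∧ (∀ x x' y, F x y = F x' y → x = x') ∧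
  ∀ c d, c ≠ d → ∀ S : Set A, S.Nonempty →
    (∀ x ∈ S, (∃ y, ∃ x' ∈ S, F x y = c ∧ F x' y = d) ∧
      (∃ y, ∃ x' ∈ S, F x y = d ∧ F x' y = c)) → False

/-- The subgraph of edges colored `c` or `d` meeting `S` on the left. -/
def twoGraph {A K : Type*} (F : A → A → K) (c d : K) (S : Set A) : SimpleGraph (A ⊕ A) where
  Adj u v := ∃ x ∈ S, ∃ y, (F x y = c ∨ F x y = d) ∧
    ((u = Sum.inl x ∧ v = Sum.inr y) ∨ (u = Sum.inr y ∧ v = Sum.inl x))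
  symm := ⟨by
    rintro u v ⟨x, hx, y, h, h'⟩
    exact ⟨x, hx, y, h, by tauto⟩⟩
  loopless := ⟨by
    rintro u ⟨x, hx, y, h, h'⟩
    rcases h' with ⟨h1, h2⟩ | ⟨h1, h2⟩ <;> simp [h1] at h2⟩

lemma adjKnn {n : ℕ} (i j : Fin n) :
    s(Sum.inl i, Sum.inr j) ∈ (completeBipartiteGraph (Fin n) (Fin n)).edgeSet := by
  simp

lemma good_of_acyclic {n k : ℕ}
    (C : (completeBipartiteGraph (Fin n) (Fin n)).edgeSet → Fin k)
    (h1 : IsProperEdgeColoring _ C) (h2 : IsAcyclicEdgeColoring _ C) :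
    GoodCol (fun i j => C ⟨s(Sum.inl i, Sum.inr j), adjKnn i j⟩) := by
  have hr : ∀ x y y' : Fin n, C ⟨s(Sum.inl x, Sum.inr y), adjKnn x y⟩ =
      C ⟨s(Sum.inl x, Sum.inr y'), adjKnn x y'⟩ → y = y' := by
    intro x y y' h
    by_contra hne
    refine h1 _ _ ?_ ⟨Sum.inl x, by simp, by simp⟩ h
    simpa using hne
  have hc : ∀ x x' y : Fin n, C ⟨s(Sum.inl x, Sum.inr y), adjKnn x y⟩ =
      C ⟨s(Sum.inl x', Sum.inr y), adjKnn x' y⟩ → x = x' := by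
    intro x y y' h
    by_contra hne
    refine h1 _ _ ?_ ⟨Sum.inr y', by simp, by simp⟩ h
    simpa using hne
  refine ⟨hr, hc, ?_⟩
  set F : Fin n → Fin n → Fin k := fun i j => C ⟨s(Sum.inl i, Sum.inr j), adjKnn i j⟩ with hF
  intro c d hcd S hS hcl
  have hr' : ∀ x y y', F x y = F x y' → y = y' := hr
  have hc' : ∀ x x' y, F x y = F x' y → x = x' := hc
  let H := twoGraph F c d S
  have hle : H ≤ completeBipartiteGraph (Fin n) (Fin n) := by
    rintro u v ⟨x, hx, y, h, ⟨rfl, rfl⟩ | ⟨rfl, rfl⟩⟩ <;> simp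
  have hL : ∀ x ∈ S, (H.neighborSet (Sum.inl x)).ncard = 2 := by
    intro x hx
    obtain ⟨⟨y1, _, _, hy1, _⟩, ⟨y2, _, _, hy2, _⟩⟩ := hcl x hx
    have : H.neighborSet (Sum.inl x) = {Sum.inr y1, Sum.inr y2} := by
      ext v
      constructor
      · rintro ⟨x', hx', y, h, ⟨h3, rfl⟩ | ⟨h3, rfl⟩⟩
        · obtain rfl := Sum.inl.inj h3
          rcases h with h | h
          · left; rw [hr' x y y1 (h.trans hy1.symm)]
          · right; rw [hr' x y y2 (h.trans hy2.symm)]; rfl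
        · simp at h3
      · rintro (rfl | rfl)
        · exact ⟨x, hx, y1, Or.inl hy1, Or.inl ⟨rfl, rfl⟩⟩
        · exact ⟨x, hx, y2, Or.inr hy2, Or.inl ⟨rfl, rfl⟩⟩
    rw [this]
    apply Set.ncard_pair
    intro h
    obtain rfl := Sum.inr.inj h
    exact hcd (hy1.symm.trans hy2)
  have hR : ∀ y x1 x2, x1 ∈ S → x2 ∈ S → F x1 y = c → F x2 y = d →
      (H.neighborSet (Sum.inr y)).ncard = 2 := by
    intro y x1 x2 hx1 hx2 h1 h2
    have : H.neighborSet (Sum.inr y) = {Sum.inl x1, Sum.inl x2} := by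
      ext v
      constructor
      · rintro ⟨x', hx', y, h, ⟨h3, rfl⟩ | ⟨h3, rfl⟩⟩
        · simp at h3
        · obtain rfl := Sum.inr.inj h3
          rcases h with h | h
          · left; rw [hc' x' x1 _ (h.trans h1.symm)]
          · right; rw [hc' x' x2 _ (h.trans h2.symm)]; rfl
      · rintro (rfl | rfl)
        · exact ⟨x1, hx1, y, Or.inl h1, Or.inr ⟨rfl, rfl⟩⟩
        · exact ⟨x2, hx2, y, Or.inr h2, Or.inr ⟨rfl, rfl⟩⟩
    rw [this]
    apply Set.ncard_pair
    intro h
    obtain rfl := Sum.inl.inj h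
    exact hcd (h1.symm.trans h2)
  have hcyc : H.IsCycles := by
    rintro v ⟨w, x, hx, y, h, ⟨rfl, rfl⟩ | ⟨rfl, rfl⟩⟩
    · exact hL x hx
    · obtain ⟨⟨y1, z1, hz1, hy1, hw1⟩, ⟨y2, z2, hz2, hy2, hw2⟩⟩ := hcl x hx
      rcases h with h | h
      · obtain rfl := hr' x y y1 (h.trans hy1.symm)
        exact hR y x z1 hx hz1 hy1 hw1
      · obtain rfl := hr' x y y2 (h.trans hy2.symm)
        exact hR y z2 x hz2 hx hw2 hy2
  obtain ⟨x, hx⟩ := hS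
  have hne : (H.neighborSet (Sum.inl x)).Nonempty := by
    apply Set.nonempty_of_ncard_ne_zero
    rw [hL x hx]; simp
  obtain ⟨w, hw, -⟩ := hcyc.exists_cycle_toSubgraph_verts_eq_connectedComponentSupp
    (c := H.connectedComponentMk (Sum.inl x)) (by simp) hne
  apply h2 _ (w.mapLe hle) (hw.mapLe hle)
  refine ⟨c, d, ?_⟩
  intro e he
  have he' := he
  rw [Walk.edges_mapLe_eq_edges] at he'
  have he2 := w.edges_subset_edgeSet he'
  induction e with | _ u v =>
  obtain ⟨x, hx, y, h, ⟨rfl, rfl⟩ | ⟨rfl, rfl⟩⟩ := he2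
  · exact h
  · simp only [hF] at h
    have hh : (s(Sum.inr y, Sum.inl x) : Sym2 (Fin n ⊕ Fin n)) = s(Sum.inl x, Sum.inr y) :=
      Sym2.eq_swap
    simpa only [hh] using h

/-- Edge coloring from a matrix. -/
def colOf {n k : ℕ} (k0 : Fin k) (F : Fin n → Fin n → Fin k) : Sym2 (Fin n ⊕ Fin n) → Fin k :=
  Sym2.lift ⟨fun u v => match u, v with
    | Sum.inl i, Sum.inr j => F i j
    | Sum.inr j, Sum.inl i => F i j
    | _, _ => k0, by
      rintro (u | u) (v | v) <;> rfl⟩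

lemma exists_col_of_good {n k : ℕ} (k0 : Fin k) (F : Fin n → Fin n → Fin k) (hF : GoodCol F) :
    ∃ C : (completeBipartiteGraph (Fin n) (Fin n)).edgeSet → Fin k,
      IsProperEdgeColoring _ C ∧ IsAcyclicEdgeColoring _ C := by
  obtain ⟨hr, hc, hS⟩ := hF
  have key : ∀ e ∈ (completeBipartiteGraph (Fin n) (Fin n)).edgeSet,
      ∃ i j, e = s(Sum.inl i, Sum.inr j) := by
    intro e he
    induction e with | _ u v =>
    rcases u with u | u <;> rcases v with v | v <;> simp at he ⊢
  have hcol : ∀ i j, colOf k0 F s(Sum.inl i, Sum.inr j) = F i j := fun _ _ => rfl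
  refine ⟨fun e => colOf k0 F e.1, ?_, ?_⟩
  · rintro ⟨e, he⟩ ⟨f, hf⟩ hne ⟨v, hv, hv'⟩ heq
    obtain ⟨i, j, rfl⟩ := key e he
    obtain ⟨i', j', rfl⟩ := key f hf
    simp only [hcol] at heq
    rcases v with v | v
    · simp at hv hv'
      subst hv hv'
      obtain rfl := hr _ _ _ heq
      exact hne rfl
    · simp at hv hv'
      subst hv hv'
      obtain rfl := hc _ _ _ heq
      exact hne rfl
  · rintro v w hw ⟨c, d, hcd⟩
    have h2 : ∀ a b, w.toSubgraph.Adj (Sum.inl a) (Sum.inr b) → F a b = c ∨ F a b = d := by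
      intro a b h
      rw [Walk.adj_toSubgraph_iff_mem_edges] at h
      exact hcd _ h
    have hLL : ∀ a ∈ {a | Sum.inl a ∈ w.support}, c ≠ d ∧
        ∃ y1 y2, w.toSubgraph.Adj (Sum.inl a) (Sum.inr y1) ∧
        w.toSubgraph.Adj (Sum.inl a) (Sum.inr y2) ∧ F a y1 = c ∧ F a y2 = d := by
      intro a ha
      obtain ⟨u1, u2, hne, hh⟩ := Set.ncard_eq_two.1 (hw.ncard_neighborSet_toSubgraph_eq_two ha)
      have hu1 : w.toSubgraph.Adj (Sum.inl a) u1 := by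
        have : u1 ∈ w.toSubgraph.neighborSet (Sum.inl a) := by rw [hh]; simp
        exact this
      have hu2 : w.toSubgraph.Adj (Sum.inl a) u2 := by
        have : u2 ∈ w.toSubgraph.neighborSet (Sum.inl a) := by rw [hh]; simp
        exact this
      rcases u1 with y1 | y1
      · simpa using hu1.adj_sub
      rcases u2 with y2 | y2
      · simpa using hu2.adj_sub
      have hn : F a y1 ≠ F a y2 := fun h => hne (by rw [hr _ _ _ h])
      rcases h2 _ _ hu1 with e1 | e1 <;> rcases h2 _ _ hu2 with e2 | e2
      · exact absurd (e1.trans e2.symm) hn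
      · exact ⟨by rw [← e1, ← e2]; exact hn, y1, y2, hu1, hu2, e1, e2⟩
      · exact ⟨by rw [← e1, ← e2]; exact hn.symm, y2, y1, hu2, hu1, e2, e1⟩
      · exact absurd (e1.trans e2.symm) hn
    have hRR : ∀ b, Sum.inr b ∈ w.support →
        ∃ x1 x2, w.toSubgraph.Adj (Sum.inr b) (Sum.inl x1) ∧
        w.toSubgraph.Adj (Sum.inr b) (Sum.inl x2) ∧ F x1 b = c ∧ F x2 b = d := by
      intro a ha
      obtain ⟨u1, u2, hne, hh⟩ := Set.ncard_eq_two.1 (hw.ncard_neighborSet_toSubgraph_eq_two ha)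
      have hu1 : w.toSubgraph.Adj (Sum.inr a) u1 := by
        have : u1 ∈ w.toSubgraph.neighborSet (Sum.inr a) := by rw [hh]; simp
        exact this
      have hu2 : w.toSubgraph.Adj (Sum.inr a) u2 := by
        have : u2 ∈ w.toSubgraph.neighborSet (Sum.inr a) := by rw [hh]; simp
        exact this
      rcases u1 with y1 | y1
      swap
      · simpa using hu1.adj_sub
      rcases u2 with y2 | y2
      swap
      · simpa using hu2.adj_sub
      have hn : F y1 a ≠ F y2 a := fun h => hne (by rw [hc _ _ _ h])
      rcases h2 _ _ hu1.symm with e1 | e1 <;> rcases h2 _ _ hu2.symm with e2 | e2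
      · exact absurd (e1.trans e2.symm) hn
      · exact ⟨y1, y2, hu1, hu2, e1, e2⟩
      · exact ⟨y2, y1, hu2, hu1, e2, e1⟩
      · exact absurd (e1.trans e2.symm) hn
    have hsupp : ∀ u v, w.toSubgraph.Adj u v → v ∈ w.support := by
      intro u v h
      have := h.snd_mem
      simpa using this
    have hne : {a | Sum.inl a ∈ w.support}.Nonempty := by
      have hv : v ∈ w.support := w.start_mem_support
      rcases v with v | v
      · exact ⟨v, hv⟩
      · obtain ⟨x1, _, h, _⟩ := hRR v hv
        exact ⟨x1, hsupp _ _ h⟩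
    have hcd' : c ≠ d := by
      obtain ⟨a, ha⟩ := hne
      exact (hLL a ha).1
    refine hS c d hcd' _ hne ?_
    intro x hx
    obtain ⟨-, y1, y2, a1, a2, e1, e2⟩ := hLL x hx
    constructor
    · obtain ⟨x1, x2, b1, b2, f1, f2⟩ := hRR y1 (hsupp _ _ a1)
      exact ⟨y1, x2, hsupp _ _ b2, e1, f2⟩
    · obtain ⟨x1, x2, b1, b2, f1, f2⟩ := hRR y2 (hsupp _ _ a2)
      exact ⟨y2, x1, hsupp _ _ b1, e2, f1⟩

lemma exists_good_coloring (p : ℕ) [Fact p.Prime] (hodd : p ≠ 2) :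
    ∃ F : ZMod p → ZMod p → Option (Option (ZMod p)), GoodCol F := by
  classical
  obtain ⟨g, hg⟩ := IsCyclic.exists_generator (α := (ZMod p)ˣ)
  obtain ⟨r, hr⟩ : ∃ r : ZMod p, r = (g : ZMod p) := ⟨_, rfl⟩
  have hgen : ∀ u v : ZMod p, u ≠ 0 → v ≠ 0 → ∃ j : ℕ, v = r ^ j * u := by
    intro u v hu hv
    obtain ⟨j, hj⟩ := (Submonoid.mem_powers_iff _ _).1
      (mem_powers_iff_mem_zpowers.2 (hg (Units.mk0 v hv / Units.mk0 u hu)))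
    refine ⟨j, ?_⟩
    have := congrArg (fun t : (ZMod p)ˣ => (t : ZMod p)) hj
    simp at this
    rw [hr, this]
    field_simp
  have hr0 : r ≠ 0 := by rw [hr]; exact g.ne_zero
  have hr1 : 1 - r ≠ 0 := by
    intro h
    have h1 : r = 1 := by linear_combination -h
    obtain ⟨j, hj⟩ := hgen 1 (-1) one_ne_zero (by simp)
    rw [h1] at hj
    have h2 : ((2 : ℕ) : ZMod p) = 0 := by push_cast; simp at hj; linear_combination -hj
    rw [ZMod.natCast_eq_zero_iff] at h2
    exact hodd ((Nat.prime_dvd_prime_iff_eq (Fact.out) Nat.prime_two).1 h2)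
  obtain ⟨F, hF⟩ : ∃ F : ZMod p → ZMod p → Option (Option (ZMod p)), F = fun x y =>
    if y = -r * x ∧ x ≠ 0 then (if x = 1 then none else some none) else some (some (x + y)) :=
    ⟨_, rfl⟩
  have hN : ∀ x y, F x y = none → x = 1 ∧ y = - r := by
    intro x y h
    simp only [hF] at h
    split_ifs at h with h1 h2
    simp_all
  have hE : ∀ x y, F x y = some none → y = -r * x ∧ x ≠ 0 ∧ x ≠ 1 := by
    intro x y h
    simp only [hF] at h
    split_ifs at h with h1 h2
    · exact ⟨h1.1, h1.2, h2⟩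
    · simp at h
  have hO : ∀ x y c, F x y = some (some c) → x + y = c ∧ (y = -r * x → x = 0) := by
    intro x y c h
    simp only [hF] at h
    split_ifs at h with h1 h2
    · simp at h
    · simp at h
      exact ⟨h, fun h3 => by tauto⟩
  refine ⟨F, ?_, ?_, ?_⟩
  · intro x y y' h
    rcases hy : F x y with _ | _ | c
    · rw [hy] at h
      rw [(hN _ _ hy).2, (hN _ _ h.symm).2]
    · rw [hy] at h
      rw [(hE _ _ hy).1, (hE _ _ h.symm).1]
    · rw [hy] at h
      linear_combination (hO _ _ _ hy).1 - (hO _ _ _ h.symm).1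
  · intro x x' y h
    rcases hy : F x y with _ | _ | c
    · rw [hy] at h
      rw [(hN _ _ hy).1, (hN _ _ h.symm).1]
    · rw [hy] at h
      have := (hE _ _ hy).1.symm.trans (hE _ _ h.symm).1
      exact mul_left_cancel₀ (neg_ne_zero.2 hr0) this
    · rw [hy] at h
      linear_combination (hO _ _ _ hy).1 - (hO _ _ _ h.symm).1
  ·
    have cN : ∀ d, none ≠ d → ∀ S : Set (ZMod p), S.Nonempty →
        (∀ x ∈ S, (∃ y, ∃ x' ∈ S, F x y = none ∧ F x' y = d)) → False := by
      rintro d hd S ⟨x, hx⟩ h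
      obtain ⟨y, x', hx', h1, h2⟩ := h x hx
      obtain ⟨y', x'', hx'', h3, h4⟩ := h x' hx'
      obtain ⟨rfl, rfl⟩ := hN _ _ h1
      obtain ⟨rfl, rfl⟩ := hN _ _ h3
      exact hd (h1.symm.trans h2)
    have cE : ∀ c : ZMod p, ∀ S : Set (ZMod p), S.Nonempty →
        (∀ x ∈ S, (∃ y, ∃ x' ∈ S, F x y = some none ∧ F x' y = some (some c))) → False := by
      rintro c S ⟨x, hx⟩ h
      have hstep : ∀ x ∈ S, c + r * x ∈ S ∧ x ≠ 0 ∧ x ≠ 1 ∧ c + r * x ≠ x := by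
        intro x hx
        obtain ⟨y, x', hx', h1, h2⟩ := h x hx
        obtain ⟨e1, e2, e3⟩ := hE _ _ h1
        have e4 : x' = c + r * x := by linear_combination (hO _ _ _ h2).1 - e1
        refine ⟨e4 ▸ hx', e2, e3, ?_⟩
        intro h5
        rw [e4, h5, h1] at h2
        simp at h2
      obtain ⟨x0, hx0⟩ : ∃ x0, x0 = c / (1 - r) := ⟨_, rfl⟩
      have hx0' : c = x0 * (1 - r) := by rw [hx0]; field_simp
      have hiter : ∀ j : ℕ, x0 + r ^ j * (x - x0) ∈ S := by
        intro j
        induction j with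
        | zero => simpa using hx
        | succ j ih =>
          have := (hstep _ ih).1
          convert this using 1
          rw [hx0']; ring
      have hxx : x - x0 ≠ 0 := by
        intro h0
        apply (hstep x hx).2.2.2
        rw [hx0']
        linear_combination (-(1 - r)) * h0
      by_cases hz : x0 = 0
      · obtain ⟨j, hj⟩ := hgen (x - x0) 1 hxx one_ne_zero
        have := hiter j
        rw [← hj, hz, zero_add] at this
        exact (hstep _ this).2.2.1 rfl
      · obtain ⟨j, hj⟩ := hgen (x - x0) (-x0) hxx (neg_ne_zero.2 hz)
        have := hiter j
        rw [← hj, add_neg_cancel] at this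
        exact (hstep _ this).2.1 rfl
    have cO : ∀ c d : ZMod p, c ≠ d → c ≠ 0 → ∀ S : Set (ZMod p), S.Nonempty →
        (∀ x ∈ S, (∃ y, ∃ x' ∈ S, F x y = some (some c) ∧ F x' y = some (some d))) → False := by
      rintro c d hcd hc S ⟨x, hx⟩ h
      have hstep : ∀ x ∈ S, x + (d - c) ∈ S ∧ x ≠ c / (1 - r) := by
        intro x hx
        obtain ⟨y, x', hx', h1, h2⟩ := h x hx
        have e1 := (hO _ _ _ h1)
        have e4 : x' = x + (d - c) := by linear_combination (hO _ _ _ h2).1 - e1.1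
        refine ⟨e4 ▸ hx', ?_⟩
        intro h5
        have h6 : c = x * (1 - r) := by rw [h5]; field_simp
        have h7 := e1.2 (by linear_combination e1.1 + h6)
        rw [h7, zero_mul] at h6
        exact hc h6
      have hiter : ∀ j : ℕ, x + j * (d - c) ∈ S := by
        intro j
        induction j with
        | zero => simpa using hx
        | succ j ih =>
          have := (hstep _ ih).1
          convert this using 1
          push_cast; ring
      have hdc : d - c ≠ 0 := sub_ne_zero.2 hcd.symm
      have := hiter ((c / (1 - r) - x) / (d - c)).val
      rw [ZMod.natCast_zmod_val, div_mul_cancel₀ _ hdc] at this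
      exact (hstep _ this).2 (by ring)
    intro c d hcd S hne h
    have hA := fun x hx => (h x hx).1
    have hB := fun x hx => (h x hx).2
    rcases c with _ | _ | c
    · exact cN _ hcd S hne hA
    · rcases d with _ | _ | d
      · exact cN _ hcd.symm S hne hB
      · exact hcd rfl
      · exact cE _ S hne hA
    · rcases d with _ | _ | d
      · exact cN _ hcd.symm S hne hB
      · exact cE _ S hne hB
      · have hcd' : c ≠ d := fun h => hcd (by rw [h])
        by_cases hc : c = 0
        · exact cO d c hcd'.symm (fun hd => hcd' (hc.trans hd.symm)) S hne hB
        · exact cO c d hcd' hc S hne hA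

lemma good_transport {A B K L : Type*} (e : B → A) (he : Function.Bijective e) (f : K → L)
    (hf : Function.Injective f) (F : A → A → K) (hF : GoodCol F) :
    GoodCol (fun i j => f (F (e i) (e j))) := by
  obtain ⟨h1, h2, h3⟩ := hF
  refine ⟨fun x y y' h => he.1 (h1 _ _ _ (hf h)), fun x x' y h => he.1 (h2 _ _ _ (hf h)), ?_⟩
  intro c d hcd S hS h
  obtain ⟨x, hx⟩ := id hS
  obtain ⟨⟨y, x', hx', rfl, rfl⟩, -⟩ := h x hx
  refine h3 _ _ (fun hh => hcd (congrArg f hh)) (Set.image e S) (hS.image e) ?_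
  rintro _ ⟨z, hz, rfl⟩
  obtain ⟨⟨y1, z1, hz1, a1, b1⟩, ⟨y2, z2, hz2, a2, b2⟩⟩ := h z hz
  exact ⟨⟨e y1, e z1, ⟨z1, hz1, rfl⟩, hf a1, hf b1⟩, ⟨e y2, e z2, ⟨z2, hz2, rfl⟩, hf a2, hf b2⟩⟩

lemma good_orbit {n : ℕ} {K : Type*} (F : Fin n → Fin n → K) (hF : GoodCol F)
    (σ τ : Equiv.Perm (Fin n)) (c d : K) (hcd : c ≠ d) (x : Fin n)
    (h : ∀ z, (τ⁻¹ * σ).SameCycle x z → F z (σ z) = c ∧ F z (τ z) = d) : False := by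
  refine hF.2.2 c d hcd {z | (τ⁻¹ * σ).SameCycle x z} ⟨x, Equiv.Perm.SameCycle.refl _ _⟩ ?_
  intro z hz
  constructor
  · refine ⟨σ z, (τ⁻¹ * σ) z, ?_, (h z hz).1, ?_⟩
    · exact Equiv.Perm.sameCycle_apply_right.2 hz
    · have := (h ((τ⁻¹ * σ) z) (Equiv.Perm.sameCycle_apply_right.2 hz)).2
      simpa using this
  · have hz' : (τ⁻¹ * σ).SameCycle x ((τ⁻¹ * σ)⁻¹ z) := by
      rw [← Equiv.Perm.sameCycle_apply_right, ← Equiv.Perm.mul_apply (τ⁻¹ * σ), mul_inv_cancel,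
        Equiv.Perm.one_apply]
      exact hz
    refine ⟨τ z, (τ⁻¹ * σ)⁻¹ z, hz', (h z hz).2, ?_⟩
    have := (h ((τ⁻¹ * σ)⁻¹ z) hz').1
    simpa using this

/-- A color occurring in all rows except possibly `a` extends to a permutation. -/
lemma exists_perm {n : ℕ} {K : Type*} (F : Fin n → Fin n → K) (hF : GoodCol F)
    (c : K) (a : Fin n) (h : ∀ x, x ≠ a → ∃ y, F x y = c) :
    ∃ σ : Equiv.Perm (Fin n), ∀ x, (x ≠ a ∨ ∃ y, F x y = c) → F x (σ x) = c := by
  classical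
  by_cases ha : ∃ y, F a y = c
  · have h' : ∀ x, ∃ y, F x y = c := by
      intro x
      by_cases hx : x = a
      · exact hx ▸ ha
      · exact h x hx
    choose f hf using h'
    have hinj : Function.Injective f := by
      intro x x' hxx
      apply hF.2.1 x x' (f x)
      rw [hf x, hxx, hf x']
    exact ⟨Equiv.ofBijective f (Finite.injective_iff_bijective.1 hinj), fun x _ => hf x⟩
  · have h' : ∀ x, ∃ y, x ≠ a → F x y = c := by
      intro x
      by_cases hx : x = a
      · exact ⟨a, fun h => absurd hx h⟩
      · obtain ⟨y, hy⟩ := h x hx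
        exact ⟨y, fun _ => hy⟩
    choose f hf using h'
    obtain ⟨b, hb⟩ : ∃ b, b ∉ (Finset.univ.erase a).image f := by
      by_contra! hcon
      have h1 : (Finset.univ.erase a).image f = Finset.univ := Finset.eq_univ_of_forall hcon
      have h2 := Finset.card_image_le (s := Finset.univ.erase a) (f := f)
      rw [h1, Finset.card_erase_of_mem (Finset.mem_univ a)] at h2
      have : 0 < n := a.pos
      simp at h2
      omega
    have hb' : ∀ x, x ≠ a → f x ≠ b := by
      intro x hx hh
      exact hb (Finset.mem_image.2 ⟨x, by simp [hx], hh⟩)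
    have hinj : Function.Injective (fun x => if x = a then b else f x) := by
      intro x x' hxx
      by_cases hx : x = a <;> by_cases hx' : x' = a <;> simp [hx, hx'] at hxx
      · rw [hx, hx']
      · exact absurd hxx.symm (hb' _ hx')
      · exact absurd hxx (hb' _ hx)
      · apply hF.2.1 x x' (f x)
        rw [hf x hx, hxx, hf x' hx']
    refine ⟨Equiv.ofBijective _ (Finite.injective_iff_bijective.1 hinj), ?_⟩
    rintro x hx
    have hxa : x ≠ a := by
      rintro rfl
      rcases hx with hx | hx
      · exact hx rfl
      · exact ha hx
    simp [hxa, hf x hxa]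

lemma count_colors {n : ℕ} (hn : 0 < n) {K : Type*} [Fintype K] (hK : Fintype.card K ≤ n + 1)
    (F : Fin n → Fin n → K) (hF : GoodCol F) :
    ∃ α : K, (∀ x, ∃ y, F x y = α) ∧ ∀ β, β ≠ α → ∃ a, (¬ ∃ y, F a y = β) ∧
      ∀ x, x ≠ a → ∃ y, F x y = β := by
  classical
  let L : K → Finset (Fin n) := fun c => Finset.univ.filter (fun x => ∃ y, F x y = c)
  have hL : ∀ c x, x ∈ L c ↔ ∃ y, F x y = c := by intro c x; simp [L]
  have hsum : ∑ c, (L c).card = n * n := by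
    have : ∑ c, (L c).card = ∑ x : Fin n, (Finset.univ.image (F x)).card := by
      have := Finset.sum_card_bipartiteAbove_eq_sum_card_bipartiteBelow
        (s := (Finset.univ : Finset K)) (t := (Finset.univ : Finset (Fin n)))
        (fun c x => ∃ y, F x y = c)
      simp only [Finset.bipartiteAbove, Finset.bipartiteBelow] at this
      refine this.trans ?_
      refine Finset.sum_congr rfl fun x _ => ?_
      congr 1
      ext c; simp
    rw [this]
    have h2 : ∀ x : Fin n, (Finset.univ.image (F x)).card = n := by
      intro x
      rw [Finset.card_image_of_injective _ (fun y y' h => hF.1 _ _ _ h)]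
      simp
    simp [h2]
  have hle : ∀ c, (L c).card ≤ n := fun c => by
    simpa using Finset.card_le_univ (L c)
  have hfull : ∀ c, (L c).card = n → ∀ x, ∃ y, F x y = c := by
    intro c hc x
    rw [← hL]
    have : L c = Finset.univ := by
      rw [← Finset.card_eq_iff_eq_univ]; simpa using hc
    rw [this]; simp
  have huniq : ∀ c d, c ≠ d → (L c).card = n → (L d).card = n → False := by
    intro c d hcd hc hd
    obtain ⟨σ, hσ⟩ := exists_perm F hF c ⟨0, hn⟩ (fun x _ => hfull c hc x)
    obtain ⟨τ, hτ⟩ := exists_perm F hF d ⟨0, hn⟩ (fun x _ => hfull d hd x)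
    exact good_orbit F hF σ τ c d hcd ⟨0, hn⟩ fun z _ =>
      ⟨hσ z (Or.inr (hfull c hc z)), hτ z (Or.inr (hfull d hd z))⟩
  obtain ⟨m, rfl⟩ : ∃ m, n = m + 1 := ⟨n - 1, by omega⟩
  obtain ⟨α, hα⟩ : ∃ α, (L α).card = m + 1 := by
    by_contra! hcon
    have h1 : ∑ c, (L c).card ≤ ∑ c : K, m :=
      Finset.sum_le_sum fun c _ => by
        have := hle c; have := hcon c; omega
    rw [hsum] at h1
    simp at h1
    nlinarith
  refine ⟨α, hfull α hα, ?_⟩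
  intro β hβ
  have hlem : ∀ c, c ≠ α → (L c).card ≤ m := by
    intro c hc
    have h1 := hle c
    have h2 : (L c).card ≠ m + 1 := fun h => huniq c α hc h hα
    omega
  have hβm : (L β).card = m := by
    by_contra hne
    have h0 := hlem β hβ
    have h1 : (L β).card + 1 ≤ m := by omega
    have e1 := Finset.add_sum_erase Finset.univ (fun c => (L c).card) (Finset.mem_univ α)
    have e2 := Finset.add_sum_erase (Finset.univ.erase α) (fun c => (L c).card)
      (Finset.mem_erase.2 ⟨hβ, Finset.mem_univ β⟩)
    have e3 : ∑ c ∈ (Finset.univ.erase α).erase β, (L c).card ≤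
        ∑ c ∈ (Finset.univ.erase α).erase β, m :=
      Finset.sum_le_sum fun c hc => hlem c (by simp at hc; tauto)
    have e4 : ((Finset.univ.erase α).erase β : Finset K).card + 2 ≤ m + 2 := by
      rw [Finset.card_erase_of_mem (Finset.mem_erase.2 ⟨hβ, Finset.mem_univ β⟩),
        Finset.card_erase_of_mem (Finset.mem_univ α), Finset.card_univ]
      omega
    simp only [Finset.sum_const, smul_eq_mul] at e3
    rw [hsum] at e1
    nlinarith
  have hcompl : (L β)ᶜ.card = 1 := by
    rw [Finset.card_compl, hβm]; simp
  obtain ⟨a, ha⟩ := Finset.card_eq_one.1 hcompl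
  have hmem : ∀ x, x ∉ L β ↔ x = a := by
    intro x
    rw [← Finset.mem_compl, ha, Finset.mem_singleton]
  refine ⟨a, ?_, ?_⟩
  · rw [← hL]; exact (hmem a).2 rfl
  · intro x hx
    rw [← hL]
    by_contra hh
    exact hx ((hmem x).1 hh)

lemma lower_bound_s3 {n : ℕ} (hn : 3 ≤ n) (hodd : Odd n) {K : Type*} [Fintype K]
    (hK : Fintype.card K ≤ n + 1) (F : Fin n → Fin n → K) (hF : GoodCol F) : False := by
  classical
  obtain ⟨α, hα, hmiss⟩ := count_colors (by omega) hK F hF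
  have z0 : Fin n := ⟨0, by omega⟩
  obtain ⟨A, hA⟩ := exists_perm F hF α z0 (fun x _ => hα x)
  replace hA : ∀ x, F x (A x) = α := fun x => hA x (Or.inr (hα x))
  have hother : ∀ a : Fin n, ∃ x, x ≠ a := by
    intro a
    have : Nontrivial (Fin n) := Fin.nontrivial_iff_two_le.2 (by omega)
    exact exists_ne a
  have main : ∀ β, β ≠ α → ∃ a, ∃ B : Equiv.Perm (Fin n), (¬ ∃ y, F a y = β) ∧
      (∀ x, x ≠ a → F x (B x) = β) ∧ (∀ x, A x ≠ B x) ∧ Equiv.Perm.sign (A⁻¹ * B) = 1 := by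
    intro β hβ
    obtain ⟨a, ha, ha'⟩ := hmiss β hβ
    obtain ⟨B, hB⟩ := exists_perm F hF β a ha'
    replace hB : ∀ x, x ≠ a → F x (B x) = β := fun x hx => hB x (Or.inl hx)
    have hsame : ∀ x, (A⁻¹ * B).SameCycle x a := by
      intro x
      by_contra hx
      refine good_orbit F hF B A β α hβ x fun z hz => ⟨hB z ?_, hA z⟩
      rintro rfl
      exact hx hz
    have hfix : ∀ x, (A⁻¹ * B) x ≠ x := by
      intro x hx
      obtain ⟨x', hx'⟩ := hother x
      have h1 := (hsame x).trans (hsame x').symm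
      exact hx' (h1.eq_of_left hx).symm
    have hcyc : (A⁻¹ * B).IsCycle := ⟨a, hfix a, fun y _ => (hsame y).symm⟩
    refine ⟨a, B, ha, hB, ?_, ?_⟩
    · intro x hx
      apply hfix x
      simp [← hx]
    · rw [hcyc.sign]
      have : (A⁻¹ * B).support = Finset.univ := by
        ext x; simpa using hfix x
      rw [this]
      simp [hodd.neg_one_pow]
  have : Nontrivial K := by
    obtain ⟨x, hx⟩ := hother z0
    refine ⟨F z0 x, F z0 z0, fun h => hx (hF.1 _ _ _ h)⟩
  obtain ⟨β, hβ⟩ := exists_ne α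
  obtain ⟨a, B, ha, hB, hAB, sB⟩ := main β hβ
  obtain ⟨γ, hγ⟩ : ∃ γ, γ = F a (B a) := ⟨_, rfl⟩
  have hγβ : γ ≠ β := fun h => ha ⟨B a, by rw [← hγ, h]⟩
  have hγα : γ ≠ α := fun h => hAB a (hF.1 a _ _ (by rw [hA, ← hγ, h]))
  obtain ⟨a', G, ha', hG, -, sG⟩ := main γ hγα
  have haa : a ≠ a' := by
    rintro rfl
    exact ha' ⟨B a, hγ.symm⟩
  have hGa : G a = B a := hF.1 a _ _ (by rw [hG a haa, hγ])
  have hfa : (B⁻¹ * G) a = a := by simp [hGa]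
  have hsame : ∀ x, x ≠ a → (B⁻¹ * G).SameCycle x a' := by
    intro x hxa
    by_contra hx
    refine good_orbit F hF G B γ β hγβ x fun z hz => ⟨hG z ?_, hB z ?_⟩
    · rintro rfl
      exact hx hz
    · rintro rfl
      exact hxa (hz.eq_of_right hfa)
  have hfix : ∀ x, x ≠ a → (B⁻¹ * G) x ≠ x := by
    intro x hxa hx
    obtain ⟨x', hx'⟩ : ∃ x', x' ∉ ({x, a} : Finset (Fin n)) := by
      by_contra! hcon
      have h1 := Finset.card_le_card (fun y _ => hcon y : (Finset.univ : Finset (Fin n)) ⊆ _)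
      have h2 := Finset.card_le_two (a := x) (b := a)
      simp at h1
      omega
    simp at hx'
    have h1 := (hsame x hxa).trans (hsame x' hx'.2).symm
    exact hx'.1 (h1.eq_of_left hx).symm
  have hcyc : (B⁻¹ * G).IsCycle :=
    ⟨a', hfix a' haa.symm, fun y hy => (hsame y (by rintro rfl; exact hy hfa)).symm⟩
  have hs := hcyc.sign
  have hsupp : (B⁻¹ * G).support = Finset.univ.erase a := by
    ext x
    rw [Equiv.Perm.mem_support]
    simp only [Finset.mem_erase, Finset.mem_univ, and_true]
    exact ⟨fun h hx => h (hx ▸ hfa), hfix x⟩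
  rw [hsupp, Finset.card_erase_of_mem (Finset.mem_univ a), Finset.card_univ, Fintype.card_fin,
    (Nat.Odd.sub_odd hodd odd_one).neg_one_pow] at hs
  have hprod : B⁻¹ * G = (A⁻¹ * B)⁻¹ * (A⁻¹ * G) := by group
  rw [hprod, Equiv.Perm.sign_mul, Equiv.Perm.sign_inv, sB, sG] at hs
  revert hs
  decide

/-- For every odd prime `p`, the acyclic chromatic index of `K_{p,p}` equals `p + 2`. -/
theorem stmt3 (p : ℕ) (hp : p.Prime) (hodd : Odd p) :
    acyclicChromaticIndex (completeBipartiteGraph (Fin p) (Fin p)) = p + 2 := by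
  have : Fact p.Prime := ⟨hp⟩
  have hp2 : p ≠ 2 := by rintro rfl; exact absurd hodd (by decide)
  have hp3 : 3 ≤ p := by have := hp.two_le; omega
  have hmem : p + 2 ∈ {k : ℕ | ∃ C : (completeBipartiteGraph (Fin p) (Fin p)).edgeSet → Fin k,
      IsProperEdgeColoring _ C ∧ IsAcyclicEdgeColoring _ C} := by
    obtain ⟨F, hF⟩ := exists_good_coloring p hp2
    have hcard : Fintype.card (Option (Option (ZMod p))) = p + 2 := by
      simp [ZMod.card]
    have hG := good_transport (ZMod.finEquiv p) (ZMod.finEquiv p).bijective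
      (Fintype.equivFinOfCardEq hcard) (Equiv.injective _) F hF
    exact exists_col_of_good ⟨0, by omega⟩ _ hG
  unfold acyclicChromaticIndex
  apply le_antisymm (Nat.sInf_le hmem)
  apply le_csInf ⟨_, hmem⟩
  rintro k ⟨C, h1, h2⟩
  by_contra hk
  exact lower_bound_s3 hp3 hodd (by simp; omega) _ (good_of_acyclic C h1 h2)
end
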